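/- Let W be a discrete memoryless channel with R_cr < C and let R ∈ (R_cr, C). Define ρ*_R := max{ |ρ| : ρ ∈ ∂E_r(R) }, where ∂E_r(R) is the subdifferential of E_r(·) at R. Suppose there exists Q ∈ P(𝒳) with E_r(R,Q) = E_r(R), the pair (Q,W) nonsingular, and −∂E_r(a,Q)/∂a|_{a=R} = ρ*_R. Then there exists a constant K₅ > 0, depending only on W, R and Q, such that for every positive integer N there exists an (N,R) code (f,φ) with maximal error probability P_e(f,φ) ≤ K₅ · N^{−(1+ρ*_R)/2} · e^{−N·E_r(R)}. -/

import Mathlib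

open Real BigOperators
open scoped Classical

namespace RCB

/-- A probability distribution on a finite alphabet. -/
def IsDist {α : Type*} [Fintype α] (Q : α → ℝ) : Prop :=
  (∀ a, 0 ≤ Q a) ∧ ∑ a, Q a = 1

/-- A discrete memoryless channel, i.e. a stochastic matrix from `X` to `Y`. -/
def IsChannel {X Y : Type*} [Fintype X] [Fintype Y] (W : X → Y → ℝ) : Prop :=
  (∀ x y, 0 ≤ W x y) ∧ ∀ x, ∑ y, W x y = 1

/-- The Gallager function `E_o(ρ, Q)`. -/
noncomputable def Eo {X Y : Type*} [Fintype X] [Fintype Y]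
    (W : X → Y → ℝ) (ρ : ℝ) (Q : X → ℝ) : ℝ :=
  - Real.log (∑ y, (∑ x, Q x * W x y ^ (1 / (1 + ρ))) ^ (1 + ρ))

/-- The random coding exponent `E_r(R, Q)` for input distribution `Q`. -/
noncomputable def ErQ {X Y : Type*} [Fintype X] [Fintype Y]
    (W : X → Y → ℝ) (R : ℝ) (Q : X → ℝ) : ℝ :=
  sSup ((fun ρ => -ρ * R + Eo W ρ Q) '' Set.Icc (0 : ℝ) 1)

/-- The random coding exponent `E_r(R)`. -/
noncomputable def Er {X Y : Type*} [Fintype X] [Fintype Y]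
    (W : X → Y → ℝ) (R : ℝ) : ℝ :=
  sSup {v : ℝ | ∃ Q : X → ℝ, IsDist Q ∧ v = ErQ W R Q}

/-- The mutual information `I(Q; W)` (natural logarithm). -/
noncomputable def MI {X Y : Type*} [Fintype X] [Fintype Y]
    (W : X → Y → ℝ) (Q : X → ℝ) : ℝ :=
  ∑ x, ∑ y, Q x * W x y * Real.log (W x y / ∑ x', Q x' * W x' y)

/-- The capacity `C = max_Q I(Q;W)`. -/
noncomputable def Capacity {X Y : Type*} [Fintype X] [Fintype Y]
    (W : X → Y → ℝ) : ℝ :=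
  sSup {v : ℝ | ∃ Q : X → ℝ, IsDist Q ∧ v = MI W Q}

/-- The critical rate of the input distribution `Q`:
`R_cr(Q) = ∂E_o(ρ,Q)/∂ρ |_{ρ=1}`. -/
noncomputable def RcrQ {X Y : Type*} [Fintype X] [Fintype Y]
    (W : X → Y → ℝ) (Q : X → ℝ) : ℝ :=
  deriv (fun ρ => Eo W ρ Q) 1

/-- The critical rate of the channel: the largest `R` with
`E_r(R) = -R + max_Q E_o(1,Q)`. -/
noncomputable def Rcr {X Y : Type*} [Fintype X] [Fintype Y]
    (W : X → Y → ℝ) : ℝ :=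
  sSup {R : ℝ | Er W R = -R + sSup {v : ℝ | ∃ Q : X → ℝ, IsDist Q ∧ v = Eo W 1 Q}}

/-- The rate `R_∞ = inf {R ≥ 0 : E_SP(R) < ∞}` (finiteness of the
sphere-packing exponent expressed as boundedness of the family of affine maps). -/
noncomputable def Rinf {X Y : Type*} [Fintype X] [Fintype Y]
    (W : X → Y → ℝ) : ℝ :=
  sInf {R : ℝ | 0 ≤ R ∧
    BddAbove {v : ℝ | ∃ (Q : X → ℝ) (ρ : ℝ), IsDist Q ∧ 0 ≤ ρ ∧ v = -ρ * R + Eo W ρ Q}}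

/-- The pair `(Q, W)` is singular if `W(y|x) = W(y|z)` whenever
`Q(x)W(y|x)Q(z)W(y|z) > 0`. -/
def Singular {X Y : Type*} (W : X → Y → ℝ) (Q : X → ℝ) : Prop :=
  ∀ x y z, 0 < Q x * W x y * (Q z * W z y) → W x y = W z y

/-- `ρ^*_R(Q) = -∂E_r(a,Q)/∂a |_{a=R}`. -/
noncomputable def rhoStarQ {X Y : Type*} [Fintype X] [Fintype Y]
    (W : X → Y → ℝ) (Q : X → ℝ) (R : ℝ) : ℝ :=
  - deriv (fun a => ErQ W a Q) R

/-- The number of messages of an `(N, R)` code: `⌈exp (N R)⌉`. -/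
noncomputable def nMsgs (N : ℕ) (R : ℝ) : ℕ := ⌈Real.exp (N * R)⌉₊

/-- The `N`-fold memoryless extension of the channel `W`. -/
noncomputable def Wn {X Y : Type*} (W : X → Y → ℝ) {N : ℕ}
    (c : Fin N → X) (y : Fin N → Y) : ℝ :=
  ∏ n, W (c n) (y n)

/-- The maximal error probability of the code `(f, φ)` over the `N`-fold
memoryless extension of `W`. -/
noncomputable def Pmax {X Y : Type*} [Fintype X] [Fintype Y] {M N : ℕ}
    (W : X → Y → ℝ) (f : Fin M → Fin N → X) (φ : (Fin N → Y) → Fin M) : ℝ :=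
  ⨆ m : Fin M, ∑ y : Fin N → Y, Wn W (f m) y * (if φ y ≠ m then (1 : ℝ) else 0)

/-- The ensemble average error probability `P̄_e(Q, N, R)`: the `⌈exp (N R)⌉`
codewords are drawn i.i.d. from `Q^N` and decoded by maximum-likelihood
decoding, ties counted as errors. -/
noncomputable def Pbar {X Y : Type*} [Fintype X] [Fintype Y]
    (W : X → Y → ℝ) (Q : X → ℝ) (N : ℕ) (R : ℝ) : ℝ :=
  ∑ c : Fin (nMsgs N R) → Fin N → X,
    (∏ m, ∏ n, Q (c m n)) *
      ((nMsgs N R : ℝ)⁻¹ *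
        ∑ m, ∑ y : Fin N → Y,
          Wn W (c m) y *
            (if ∃ m', m' ≠ m ∧ Wn W (c m) y ≤ Wn W (c m') y then (1 : ℝ) else 0))

/-- The tilted output distribution `f_ρ`. -/
noncomputable def fRho {X Y : Type*} [Fintype X] [Fintype Y]
    (W : X → Y → ℝ) (Q : X → ℝ) (ρ : ℝ) (y : Y) : ℝ :=
  (∑ x, Q x * W x y ^ (1 / (1 + ρ))) ^ (1 + ρ) /
    ∑ b, (∑ a, Q a * W a b ^ (1 / (1 + ρ))) ^ (1 + ρ)

/-- The cumulant generating function
`Λ_ρ(λ) = log E_{P_{X,Y}}[exp(λ log (f_ρ(Y)/W(Y|X)))]` with `P_{X,Y} = Q × W`. -/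
noncomputable def Lam {X Y : Type*} [Fintype X] [Fintype Y]
    (W : X → Y → ℝ) (Q : X → ℝ) (ρ : ℝ) (t : ℝ) : ℝ :=
  Real.log (∑ x, ∑ y, Q x * W x y * Real.exp (t * Real.log (fRho W Q ρ y / W x y)))

/-- `P_{X,Y,Z}(S̃_Q)` where `P_{X,Y,Z}(x,y,z) = Q(x)W(y|x)Q(z)` and
`S̃_Q = {(x,y,z) : Q(x)W(y|x)Q(z)W(y|z) > 0}`. -/
noncomputable def PStilde {X Y : Type*} [Fintype X] [Fintype Y]
    (W : X → Y → ℝ) (Q : X → ℝ) : ℝ :=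
  ∑ x, ∑ y, ∑ z,
    if 0 < Q x * W x y * (Q z * W z y) then Q x * W x y * Q z else 0

/-- The bivariate cumulant generating function `Λ_{1,ρ}(v)` with respect to the
conditional distribution `P̃_{X,Y,Z}` of `P_{X,Y,Z}` given `S̃_Q`. -/
noncomputable def Lam1 {X Y : Type*} [Fintype X] [Fintype Y]
    (W : X → Y → ℝ) (Q : X → ℝ) (ρ : ℝ) (v : ℝ × ℝ) : ℝ :=
  Real.log ((∑ x, ∑ y, ∑ z,
    if 0 < Q x * W x y * (Q z * W z y) then
      Q x * W x y * Q z *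
        Real.exp (v.1 * Real.log (W x y / fRho W Q ρ y) +
          v.2 * Real.log (W z y / W x y))
    else 0) / PStilde W Q)

/-- The subdifferential of `f : ℝ → ℝ` at `R` (for convex `f`). -/
def Subderiv (f : ℝ → ℝ) (R : ℝ) : Set ℝ :=
  {g : ℝ | ∀ x, f R + g * (x - R) ≤ f x}

/-- The tilted backward channel `P^ρ_{X|Y}`. -/
noncomputable def PXgY {X Y : Type*} [Fintype X]
    (W : X → Y → ℝ) (Q : X → ℝ) (ρ : ℝ) (x : X) (y : Y) : ℝ :=
  Q x * W x y ^ (1 / (1 + ρ)) / ∑ a, Q a * W a y ^ (1 / (1 + ρ))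

/-- The tilted joint distribution `P^ρ_{X,Y}(x,y) = P^ρ_{X|Y}(x|y) P^ρ_Y(y)`. -/
noncomputable def PXY {X Y : Type*} [Fintype X] [Fintype Y]
    (W : X → Y → ℝ) (Q : X → ℝ) (ρ : ℝ) (x : X) (y : Y) : ℝ :=
  PXgY W Q ρ x y * fRho W Q ρ y

/-!
Draw the codewords independently from `Q ^ N` and decode by maximum likelihood. Given the output
`y` and the transmitted codeword, the union bound truncated at `1` controls the error probability
(`rcuTerm`). After tilting the codeword law by the power `1 / (1 + ρ)` of the likelihood, the
quantity to be bounded is a two-sided exponential functional of the log-likelihood, peaked at the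
threshold where the union bound reaches `1`; it is therefore at most a constant times the largest
mass that the log-likelihood gives to an interval of length one.

Under the tilted law the log-likelihood is a sum of independent terms, and nonsingularity provides
an output letter `b` at which the terms are not constant. Esseen's smoothing argument bounds the
mass of a unit interval by `O(1 / √k)`, where `k` is the number of occurrences of `b` in `y`. The
bound enters once for the transmitted codeword and, raised to the power `ρ`, once for the competing
ones, which gives `k ^ (-(1 + ρ) / 2)`. Under the tilted output law `k` is binomial, so on average
this is of order `N ^ (-(1 + ρ) / 2)`. Discarding the worst half of the codewords turns average
into maximal error probability. Finally, `Rcr W < R < Capacity W` forces `ρ` into `(0, 1)`, and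
the slope hypothesis identifies it with `ρ*_R`.
-/

section CharacteristicSum

variable {ι : Type*} [Fintype ι]

/-- The characteristic function at `t` of the weights `p` transported by `V`; it replaces Mathlib's
`MeasureTheory.charFun` for finitely supported measures. -/
noncomputable def charSum (p V : ι → ℝ) (t : ℝ) : ℂ :=
  ∑ x, (p x : ℂ) * Complex.exp ((t * V x : ℝ) * Complex.I)

theorem charSum_re (p V : ι → ℝ) (t : ℝ) : (charSum p V t).re = ∑ x, p x * cos (t * V x) := by
  simp only [charSum, Complex.re_sum, Complex.re_ofReal_mul, Complex.exp_ofReal_mul_I_re]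

theorem charSum_im (p V : ι → ℝ) (t : ℝ) : (charSum p V t).im = ∑ x, p x * sin (t * V x) := by
  simp only [charSum, Complex.im_sum, Complex.im_ofReal_mul, Complex.exp_ofReal_mul_I_im]

theorem norm_charSum_le_sum {p : ι → ℝ} (hp : ∀ x, 0 ≤ p x) (V : ι → ℝ) (t : ℝ) :
    ‖charSum p V t‖ ≤ ∑ x, p x := by
  refine (norm_sum_le _ _).trans_eq (Finset.sum_congr rfl fun x _ => ?_)
  rw [norm_mul, Complex.norm_exp_ofReal_mul_I, mul_one, Complex.norm_real,
    Real.norm_of_nonneg (hp x)]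

theorem norm_charSum_sq (p V : ι → ℝ) (t : ℝ) :
    ‖charSum p V t‖ ^ 2 = ∑ i, ∑ j, p i * p j * cos (t * (V i - V j)) := by
  rw [Complex.sq_norm, Complex.normSq_apply, charSum_re, charSum_im, Finset.sum_mul_sum,
    Finset.sum_mul_sum, ← Finset.sum_add_distrib]
  refine Finset.sum_congr rfl fun i _ => ?_
  rw [← Finset.sum_add_distrib]
  refine Finset.sum_congr rfl fun j _ => ?_
  rw [mul_sub, cos_sub]
  ring

theorem sum_mul_cos_le_norm_charSum (p V : ι → ℝ) (t a : ℝ) :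
    ∑ x, p x * cos (t * (V x - a)) ≤ ‖charSum p V t‖ := by
  have hrotate : Complex.exp ((-(t * a) : ℝ) * Complex.I) * charSum p V t =
      charSum p (fun x => V x - a) t := by
    rw [charSum, Finset.mul_sum]
    refine Finset.sum_congr rfl fun x _ => ?_
    rw [mul_left_comm, ← Complex.exp_add]
    push_cast
    ring_nf
  calc ∑ x, p x * cos (t * (V x - a)) = (charSum p (fun x => V x - a) t).re :=
        (charSum_re ..).symm
    _ ≤ ‖charSum p (fun x => V x - a) t‖ := Complex.re_le_norm _
    _ = ‖charSum p V t‖ := by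
        rw [← hrotate, norm_mul, Complex.norm_exp_ofReal_mul_I, one_mul]

theorem charSum_pi [DecidableEq ι] {A : Type*} [Fintype A] (p V : ι → A → ℝ) (t : ℝ) :
    charSum (fun x : ι → A => ∏ i, p i (x i)) (fun x => ∑ i, V i (x i)) t =
      ∏ i, charSum (p i) (V i) t := by
  simp only [charSum]
  rw [Fintype.prod_sum]
  refine Finset.sum_congr rfl fun x _ => ?_
  rw [Finset.prod_mul_distrib, ← Complex.exp_sum]
  push_cast
  rw [Finset.mul_sum, Finset.sum_mul]

theorem mul_one_sub_cos_le_sq_sub_norm_charSum_sq {p : ι → ℝ} (hp : ∀ x, 0 ≤ p x) (V : ι → ℝ)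
    (i j : ι) (t : ℝ) :
    p i * p j * (1 - cos (t * (V i - V j))) ≤ (∑ x, p x) ^ 2 - ‖charSum p V t‖ ^ 2 := by
  have hterm : ∀ k l, 0 ≤ p k * p l * (1 - cos (t * (V k - V l))) := fun k l =>
    mul_nonneg (mul_nonneg (hp k) (hp l)) (sub_nonneg.mpr (cos_le_one _))
  calc p i * p j * (1 - cos (t * (V i - V j)))
      ≤ ∑ l, p i * p l * (1 - cos (t * (V i - V l))) :=
        Finset.single_le_sum (f := fun l => p i * p l * (1 - cos (t * (V i - V l))))
          (fun l _ => hterm i l) (Finset.mem_univ j)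
    _ ≤ ∑ k, ∑ l, p k * p l * (1 - cos (t * (V k - V l))) :=
        Finset.single_le_sum (f := fun k => ∑ l, p k * p l * (1 - cos (t * (V k - V l))))
          (fun k _ => Finset.sum_nonneg fun l _ => hterm k l) (Finset.mem_univ i)
    _ = (∑ x, p x) ^ 2 - ‖charSum p V t‖ ^ 2 := by
        rw [norm_charSum_sq, sq, Finset.sum_mul_sum]
        simp only [mul_sub, mul_one, Finset.sum_sub_distrib]

theorem exists_norm_charSum_le_exp {p V : ι → ℝ} (hp : ∀ x, 0 ≤ p x) {i j : ι}
    (hi : 0 < p i) (hj : 0 < p j) (hV : V i ≠ V j) :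
    ∃ c δ : ℝ, 0 < c ∧ 0 < δ ∧ δ ≤ 1 ∧
      ∀ t, |t| ≤ δ → ‖charSum p V t‖ ≤ (∑ x, p x) * exp (-(c * t ^ 2)) := by
  set d := V i - V j
  set Γ := ∑ x, p x
  have hd : d ≠ 0 := sub_ne_zero.mpr hV
  have hΓ : 0 < Γ := Finset.sum_pos' (fun x _ => hp x) ⟨i, Finset.mem_univ i, hi⟩
  set c := p i * p j * d ^ 2 / (π ^ 2 * Γ ^ 2) with hc
  refine ⟨c, min 1 (π / |d|), by positivity, by positivity, min_le_left _ _, fun t ht => ?_⟩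
  have hcos : 2 / π ^ 2 * (t * d) ^ 2 ≤ 1 - cos (t * d) := by
    have habs : |t * d| ≤ π := by
      rw [abs_mul, ← le_div_iff₀ (abs_pos.mpr hd)]
      exact ht.trans (min_le_right _ _)
    linarith [cos_le_one_sub_mul_cos_sq habs]
  refine le_of_sq_le_sq ?_ (by positivity)
  calc ‖charSum p V t‖ ^ 2 ≤ Γ ^ 2 - p i * p j * (2 / π ^ 2 * (t * d) ^ 2) := by
        linarith [mul_le_mul_of_nonneg_left hcos (mul_pos hi hj).le,
          mul_one_sub_cos_le_sq_sub_norm_charSum_sq hp V i j t]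
    _ = Γ ^ 2 * (-(2 * (c * t ^ 2)) + 1) := by
        rw [hc]
        field_simp
        ring
    _ ≤ Γ ^ 2 * exp (-(2 * (c * t ^ 2))) := by
        gcongr
        exact add_one_le_exp _
    _ = (Γ * exp (-(c * t ^ 2))) ^ 2 := by
        rw [mul_pow, ← exp_nat_mul]
        ring_nf

end CharacteristicSum

section Concentration

/-- The two-sided geometric series `∑ₖ exp (-c |k|)`, which dominates both Gaussian and Laplace
sums over the integers. -/
noncomputable def expSum (c : ℝ) : ℝ := ∑' k : ℤ, exp (-c * |(k : ℝ)|)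

theorem summable_exp_neg_mul_abs_int {c : ℝ} (hc : 0 < c) :
    Summable fun k : ℤ => exp (-c * |(k : ℝ)|) := by
  have h : Summable fun n : ℕ => exp (-c * (n : ℝ)) := by
    simpa only [mul_comm] using summable_exp_nat_mul_iff.mpr (neg_lt_zero.mpr hc)
  refine Summable.of_nat_of_neg ?_ ?_ <;> simpa using h

theorem expSum_pos {c : ℝ} (hc : 0 < c) : 0 < expSum c :=
  (summable_exp_neg_mul_abs_int hc).tsum_pos (fun _ => (exp_pos _).le) 0 (exp_pos _)

/-- Bounds the total of a Laplace kernel of rate `c` against weights of mass at most one on every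
unit interval. -/
noncomputable def laplaceConst (c : ℝ) : ℝ := exp c * expSum c

theorem laplaceConst_pos {c : ℝ} (hc : 0 < c) : 0 < laplaceConst c :=
  mul_pos (exp_pos c) (expSum_pos hc)

theorem sum_exp_neg_mul_sq_le_expSum {c : ℝ} (hc : 0 < c) {m : ℕ} (i : Fin m) :
    ∑ j : Fin m, exp (-c * ((i : ℝ) - j) ^ 2) ≤ expSum c := by
  have hinj : Function.Injective fun j : Fin m => ((i : ℕ) : ℤ) - (j : ℕ) := fun j k h =>
    Fin.ext (by simpa using h)
  rw [← tsum_fintype (L := .unconditional _)]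
  refine Summable.tsum_le_tsum_of_inj _ hinj (fun _ _ => (exp_pos _).le) (fun j => ?_)
    (hasSum_fintype _).summable (summable_exp_neg_mul_abs_int hc)
  have habs : |((((i : ℕ) : ℤ) - (j : ℕ) : ℤ) : ℝ)| ≤ ((i : ℝ) - j) ^ 2 := by
    have := Int.natAbs_le_self_sq (((i : ℕ) : ℤ) - (j : ℕ))
    rw [Int.natCast_natAbs] at this
    exact_mod_cast this
  exact exp_le_exp.mpr (by linarith [mul_le_mul_of_nonneg_left habs hc.le])

variable {ι : Type*} [Fintype ι] {p V : ι → ℝ}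

/-- The mass which the weights `p`, transported by `V`, put on `[a, a + 1]`; its supremum over `a`
is Lévy's concentration function. -/
noncomputable def unitIntervalMass (p V : ι → ℝ) (a : ℝ) : ℝ :=
  ∑ x with V x ∈ Set.Icc a (a + 1), p x

theorem unitIntervalMass_nonneg (hp : ∀ x, 0 ≤ p x) (V : ι → ℝ) (a : ℝ) :
    0 ≤ unitIntervalMass p V a :=
  Finset.sum_nonneg fun x _ => hp x

theorem unitIntervalMass_congr {V' : ι → ℝ} (h : ∀ x, p x ≠ 0 → V x = V' x) (a : ℝ) :
    unitIntervalMass p V a = unitIntervalMass p V' a := by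
  simp only [unitIntervalMass, Finset.sum_filter]
  refine Finset.sum_congr rfl fun x _ => ?_
  by_cases hx : p x = 0
  · simp only [hx, ite_self]
  · rw [h x hx]

theorem le_unitIntervalMass (hp : ∀ x, 0 ≤ p x) (V : ι → ℝ) (x : ι) :
    p x ≤ unitIntervalMass p V (V x) :=
  Finset.single_le_sum (fun z _ => hp z)
    (Finset.mem_filter.mpr ⟨Finset.mem_univ x, by simp⟩)

theorem sum_mul_exp_neg_mul_abs_le {D κ : ℝ} (hp : ∀ x, 0 ≤ p x) (hκ : 0 < κ)
    (hD : ∀ a, unitIntervalMass p V a ≤ D) (b : ℝ) :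
    ∑ x, p x * exp (-κ * |V x - b|) ≤ D * laplaceConst κ := by
  have hcell : ∀ x, exp (-κ * |V x - b|) ≤ exp κ * exp (-κ * |(⌊V x - b⌋ : ℝ)|) := fun x => by
    have habs : |(⌊V x - b⌋ : ℝ)| ≤ |V x - b| + 1 := by
      have := abs_sub_abs_le_abs_sub (⌊V x - b⌋ : ℝ) (V x - b)
      have := abs_le.mpr (show -1 ≤ (⌊V x - b⌋ : ℝ) - (V x - b) ∧ _ ≤ (1 : ℝ) by
        constructor <;> linarith [Int.floor_le (V x - b), Int.lt_floor_add_one (V x - b)])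
      linarith
    rw [← exp_add]
    exact exp_le_exp.mpr (by linarith [mul_le_mul_of_nonneg_left habs hκ.le])
  have hfiber : ∀ k : ℤ, ∑ x with ⌊V x - b⌋ = k, p x ≤ D := fun k => by
    refine le_trans (Finset.sum_le_sum_of_subset_of_nonneg (fun x hx => ?_) fun x _ _ => hp x)
      (hD (b + k))
    obtain ⟨h1, h2⟩ := Int.floor_eq_iff.mp (Finset.mem_filter.mp hx).2
    exact Finset.mem_filter.mpr ⟨Finset.mem_univ x, by linarith, by linarith⟩
  have hD0 : 0 ≤ D := (unitIntervalMass_nonneg hp V 0).trans (hD 0)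
  set cells : Finset ℤ := Finset.univ.image fun x => ⌊V x - b⌋
  calc ∑ x, p x * exp (-κ * |V x - b|)
      ≤ ∑ x, p x * (exp κ * exp (-κ * |(⌊V x - b⌋ : ℝ)|)) :=
        Finset.sum_le_sum fun x _ => mul_le_mul_of_nonneg_left (hcell x) (hp x)
    _ = ∑ k ∈ cells, (∑ x with ⌊V x - b⌋ = k, p x) * (exp κ * exp (-κ * |(k : ℝ)|)) := by
        rw [← Finset.sum_fiberwise_of_maps_to fun x _ =>
          Finset.mem_image_of_mem (fun x => ⌊V x - b⌋) (Finset.mem_univ x)]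
        refine Finset.sum_congr rfl fun k _ => ?_
        rw [Finset.sum_mul]
        exact Finset.sum_congr rfl fun x hx => by rw [(Finset.mem_filter.mp hx).2]
    _ ≤ ∑ k ∈ cells, D * (exp κ * exp (-κ * |(k : ℝ)|)) := by
        gcongr with k
        exact hfiber k
    _ = D * (exp κ * ∑ k ∈ cells, exp (-κ * |(k : ℝ)|)) := by
        rw [← Finset.mul_sum, ← Finset.mul_sum]
    _ ≤ D * laplaceConst κ := by
        rw [laplaceConst]
        gcongr
        exact (summable_exp_neg_mul_abs_int hκ).sum_le_tsum _ fun _ _ => (exp_pos _).le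

theorem sq_div_four_le_norm_charSum_grid_sq {m : ℕ} {δ u : ℝ} (hδ : 0 ≤ δ) (hδ1 : δ ≤ 1)
    (hu : 0 ≤ u) (hu1 : u ≤ 1) :
    (m : ℝ) ^ 2 / 4 ≤ ‖charSum (fun _ : Fin m => 1) (fun j : Fin m => (j : ℝ) * δ / m) u‖ ^ 2 := by
  have hcos : ∀ j : Fin m, 1 / 2 ≤ cos (u * (j * δ / m)) := fun j => by
    have hm : (0 : ℝ) < m := Nat.cast_pos.mpr j.pos
    have hj : (j : ℝ) * δ / m ≤ 1 := (div_le_one hm).mpr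
      ((mul_le_of_le_one_right (Nat.cast_nonneg _) hδ1).trans (mod_cast j.is_lt.le))
    have hnonneg : 0 ≤ u * (j * δ / m) := by positivity
    have hle : u * (j * δ / m) ≤ 1 := mul_le_one₀ hu1 (by positivity) hj
    nlinarith [one_sub_sq_div_two_le_cos (x := u * (j * δ / m))]
  calc (m : ℝ) ^ 2 / 4 = (∑ _j : Fin m, (1 / 2 : ℝ)) ^ 2 := by
        rw [Finset.sum_const, Finset.card_univ, Fintype.card_fin, nsmul_eq_mul]
        ring
    _ ≤ (∑ j : Fin m, 1 * cos (u * (j * δ / m))) ^ 2 := by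
        gcongr with j
        simpa only [one_mul] using hcos j
    _ ≤ _ := by
        rw [← charSum_re, sq_le_sq, abs_norm]
        exact Complex.abs_re_le_norm _

-- Esseen's inequality, with the integral of the characteristic function replaced by a double sum
-- over a grid, so that no measure theory is needed.
theorem unitIntervalMass_le_sum_norm_charSum (hp : ∀ x, 0 ≤ p x) {δ : ℝ} (hδ : 0 ≤ δ) (hδ1 : δ ≤ 1)
    {m : ℕ} (hm : 0 < m) (a : ℝ) :
    unitIntervalMass p V a ≤
      4 / (m : ℝ) ^ 2 * ∑ i : Fin m, ∑ j : Fin m, ‖charSum p V (i * δ / m - j * δ / m)‖ := by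
  have : (0 : ℝ) < m := Nat.cast_pos.mpr hm
  set kernel : ι → ℂ := fun x =>
    charSum (fun _ : Fin m => 1) (fun j : Fin m => (j : ℝ) * δ / m) (V x - a) with hkernel
  have hmarkov : unitIntervalMass p V a * ((m : ℝ) ^ 2 / 4) ≤ ∑ x, p x * ‖kernel x‖ ^ 2 := by
    rw [unitIntervalMass, Finset.sum_mul]
    refine (Finset.sum_le_sum fun x hx => ?_).trans
      (Finset.sum_le_sum_of_subset_of_nonneg (Finset.subset_univ _) fun x _ _ =>
        mul_nonneg (hp x) (sq_nonneg ‖kernel x‖))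
    obtain ⟨hax, hxa⟩ := (Finset.mem_filter.mp hx).2
    exact mul_le_mul_of_nonneg_left
      (sq_div_four_le_norm_charSum_grid_sq hδ hδ1 (by linarith) (by linarith)) (hp x)
  have hexpand : ∑ x, p x * ‖kernel x‖ ^ 2 =
      ∑ i : Fin m, ∑ j : Fin m, ∑ x, p x * cos ((i * δ / m - j * δ / m) * (V x - a)) := by
    simp only [hkernel, norm_charSum_sq, one_mul, Finset.mul_sum]
    rw [Finset.sum_comm]
    refine Finset.sum_congr rfl fun i _ => ?_
    rw [Finset.sum_comm]
    simp only [mul_comm (V _ - a)]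
  have hbound := hmarkov.trans (hexpand.trans_le (Finset.sum_le_sum fun i _ =>
    Finset.sum_le_sum fun j _ => sum_mul_cos_le_norm_charSum p V _ a))
  rw [← le_div_iff₀ (by positivity)] at hbound
  exact hbound.trans_eq (by field_simp)

theorem norm_charSum_grid_le {c δ Γ : ℝ} (hc : 0 ≤ c) (hδ : 0 ≤ δ) {n m : ℕ}
    (hmn : m ^ 2 ≤ n + 1) (h : ∀ t, |t| ≤ δ → ‖charSum p V t‖ ≤ Γ * exp (-(c * t ^ 2)) ^ n)
    (i j : Fin m) :
    ‖charSum p V (i * δ / m - j * δ / m)‖ ≤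
      Γ * exp (c * δ ^ 2) * exp (-(c * δ ^ 2) * ((i : ℝ) - j) ^ 2) := by
  have hm : (0 : ℝ) < m := Nat.cast_pos.mpr i.pos
  have hmnR : (m : ℝ) ^ 2 ≤ n + 1 := mod_cast hmn
  have hΓ : 0 ≤ Γ := by simpa using (norm_nonneg _).trans (h 0 (by simpa using hδ))
  set t : ℝ := i * δ / m - j * δ / m with ht
  have htm : t * m = ((i : ℝ) - j) * δ := by
    rw [ht]
    field_simp
  have htδ : |t| ≤ δ := by
    have hij : |(i : ℝ) - j| ≤ m := abs_sub_le_of_nonneg_of_le (Nat.cast_nonneg _)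
      (mod_cast i.is_lt.le) (Nat.cast_nonneg _) (mod_cast j.is_lt.le)
    refine le_of_mul_le_mul_right ?_ hm
    rw [← abs_of_pos hm, ← abs_mul, htm, abs_mul, abs_of_nonneg hδ, abs_of_pos hm, mul_comm δ]
    exact mul_le_mul_of_nonneg_right hij hδ
  refine (h t htδ).trans ?_
  rw [mul_assoc, ← exp_nat_mul, ← exp_add]
  refine mul_le_mul_of_nonneg_left (exp_le_exp.mpr ?_) hΓ
  calc (n : ℝ) * -(c * t ^ 2) ≤ c * t ^ 2 - c * (t ^ 2 * m ^ 2) := by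
        linarith [mul_le_mul_of_nonneg_left hmnR (by positivity : 0 ≤ c * t ^ 2)]
    _ ≤ c * δ ^ 2 - c * (t * m) ^ 2 := by
        rw [mul_pow, ← sq_abs t]
        gcongr
    _ = c * δ ^ 2 + -(c * δ ^ 2) * ((i : ℝ) - j) ^ 2 := by
        rw [htm]
        ring

theorem unitIntervalMass_le_of_charSum_le {c δ Γ : ℝ} (hp : ∀ x, 0 ≤ p x) (hc : 0 < c)
    (hδ : 0 < δ) (hδ1 : δ ≤ 1) (n : ℕ)
    (h : ∀ t, |t| ≤ δ → ‖charSum p V t‖ ≤ Γ * exp (-(c * t ^ 2)) ^ n) (a : ℝ) :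
    unitIntervalMass p V a ≤
      8 * laplaceConst (c * δ ^ 2) * Γ / √((n : ℝ) + 1) := by
  set m := Nat.sqrt (n + 1)
  have hm : 0 < m := Nat.sqrt_pos.mpr n.succ_pos
  have : (0 : ℝ) < m := Nat.cast_pos.mpr hm
  have hsqrt : √((n : ℝ) + 1) ≤ 2 * m := by
    refine sqrt_le_left (by positivity) |>.mpr ?_
    have : n + 1 ≤ (2 * m) ^ 2 :=
      (Nat.lt_succ_sqrt' (n + 1)).le.trans (Nat.pow_le_pow_left (by omega) 2)
    exact_mod_cast this
  have hΓ : 0 ≤ Γ := by simpa using (norm_nonneg _).trans (h 0 (by simpa using hδ.le))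
  calc unitIntervalMass p V a
      ≤ 4 / (m : ℝ) ^ 2 * ∑ i : Fin m, ∑ j : Fin m, ‖charSum p V (i * δ / m - j * δ / m)‖ :=
        unitIntervalMass_le_sum_norm_charSum hp hδ.le hδ1 hm a
    _ ≤ 4 / (m : ℝ) ^ 2 * ∑ i : Fin m, ∑ j : Fin m,
          Γ * exp (c * δ ^ 2) * exp (-(c * δ ^ 2) * ((i : ℝ) - j) ^ 2) := by
        gcongr with i _ j
        exact norm_charSum_grid_le hc.le hδ.le (Nat.sqrt_le' (n + 1)) h i j
    _ ≤ 4 / (m : ℝ) ^ 2 * ∑ _i : Fin m, Γ * exp (c * δ ^ 2) * expSum (c * δ ^ 2) := by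
        gcongr with i
        rw [← Finset.mul_sum]
        gcongr
        exact sum_exp_neg_mul_sq_le_expSum (by positivity) i
    _ = 8 * laplaceConst (c * δ ^ 2) * Γ / (2 * m) := by
        rw [Finset.sum_const, Finset.card_univ, Fintype.card_fin, nsmul_eq_mul, laplaceConst]
        field_simp
        ring
    _ ≤ 8 * laplaceConst (c * δ ^ 2) * Γ / √((n : ℝ) + 1) := by
        have := laplaceConst_pos (c := c * δ ^ 2) (by positivity)
        gcongr

theorem unitIntervalMass_pi_le [DecidableEq ι] {A : Type*} [Fintype A] {p V : ι → A → ℝ}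
    (hp : ∀ i x, 0 ≤ p i x) {c δ : ℝ} (hc : 0 < c) (hδ : 0 < δ) (hδ1 : δ ≤ 1) {S : Finset ι}
    (hS : ∀ i ∈ S, ∀ t, |t| ≤ δ →
      ‖charSum (p i) (V i) t‖ ≤ (∑ x, p i x) * exp (-(c * t ^ 2))) (a : ℝ) :
    unitIntervalMass (fun x : ι → A => ∏ i, p i (x i)) (fun x => ∑ i, V i (x i)) a ≤
      8 * laplaceConst (c * δ ^ 2) * (∏ i, ∑ x, p i x) / √((S.card : ℝ) + 1) := by
  refine unitIntervalMass_le_of_charSum_le (fun x => Finset.prod_nonneg fun i _ => hp i _) hc hδ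
    hδ1 S.card (fun t ht => ?_) a
  calc ‖charSum (fun x : ι → A => ∏ i, p i (x i)) (fun x => ∑ i, V i (x i)) t‖
      = ∏ i, ‖charSum (p i) (V i) t‖ := by rw [charSum_pi, norm_prod]
    _ ≤ ∏ i, (∑ x, p i x) * (if i ∈ S then exp (-(c * t ^ 2)) else 1) := by
        refine Finset.prod_le_prod (fun i _ => norm_nonneg _) fun i _ => ?_
        split_ifs with hi
        · exact hS i hi t ht
        · rw [mul_one]
          exact norm_charSum_le_sum (hp i) (V i) t
    _ = (∏ i, ∑ x, p i x) * exp (-(c * t ^ 2)) ^ S.card := by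
        rw [Finset.prod_mul_distrib, Finset.prod_ite_mem, Finset.univ_inter, Finset.prod_const]

end Concentration

section Product

variable {A : Type*} [Fintype A]

theorem IsDist.pi {ι : Type*} [Fintype ι] [DecidableEq ι] {P : ι → A → ℝ}
    (hP : ∀ i, IsDist (P i)) : IsDist fun x : ι → A => ∏ i, P i (x i) := by
  refine ⟨fun x => Finset.prod_nonneg fun i _ => (hP i).1 (x i), ?_⟩
  rw [← Fintype.prod_sum]
  exact Finset.prod_eq_one fun i _ => (hP i).2

theorem Wn_nonneg {X Y : Type*} {W : X → Y → ℝ} (hW : ∀ x y, 0 ≤ W x y) {N : ℕ} (x : Fin N → X)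
    (y : Fin N → Y) : 0 ≤ Wn W x y :=
  Finset.prod_nonneg fun n _ => hW (x n) (y n)

variable {P : A → ℝ} {b : A}

-- Inserting the letter `b` at each of the `N + 1` positions of `y` gives a word with
-- `#{n | y n = b} + 1` letters `b`, whence the size bias that cancels the reciprocal.
theorem sum_prod_mul_inv_card_succ_le (hP : IsDist P) (hb : 0 < P b) (N : ℕ) :
    ∑ y : Fin N → A, (∏ n, P (y n)) * ((Finset.card {n | y n = b} : ℝ) + 1)⁻¹ ≤
      ((N + 1) * P b)⁻¹ := by
  set E := ∑ y : Fin N → A, (∏ n, P (y n)) * ((Finset.card {n | y n = b} : ℝ) + 1)⁻¹ with hE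
  have hinsert : ∀ j : Fin (N + 1), ∑ y : Fin (N + 1) → A, (∏ n, P (y n)) *
      ((if y j = b then 1 else 0) * (Finset.card {n | y n = b} : ℝ)⁻¹) = P b * E := fun j => by
    rw [← (Fin.insertNthEquiv (fun _ => A) j).sum_comp, Fintype.sum_prod_type,
      Finset.sum_eq_single b, hE, Finset.mul_sum]
    · refine Finset.sum_congr rfl fun y _ => ?_
      rw [Finset.card_filter, Fin.sum_univ_succAbove _ j, Fin.prod_univ_succAbove _ j]
      simp only [Fin.insertNthEquiv_apply, Fin.insertNth_apply_same,
        Fin.insertNth_apply_succAbove, if_true, one_mul, Nat.cast_add, Nat.cast_one]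
      rw [← Finset.card_filter, add_comm, mul_assoc]
    · intro a _ ha
      simp [ha]
    · simp
  have hdist : IsDist fun y : Fin (N + 1) → A => ∏ n, P (y n) := IsDist.pi fun _ => hP
  have hmul : E * ((N + 1) * P b) ≤ 1 := calc
    E * ((N + 1) * P b) = ∑ _j : Fin (N + 1), P b * E := by
        rw [Finset.sum_const, Finset.card_univ, Fintype.card_fin, nsmul_eq_mul]
        push_cast
        ring
    _ = ∑ y : Fin (N + 1) → A, (∏ n, P (y n)) *
          ((Finset.card {n | y n = b} : ℝ) * (Finset.card {n | y n = b} : ℝ)⁻¹) := by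
        rw [Finset.sum_congr rfl fun j _ => (hinsert j).symm, Finset.sum_comm]
        refine Finset.sum_congr rfl fun y _ => ?_
        rw [← Finset.mul_sum, ← Finset.sum_mul, Finset.sum_boole]
    _ ≤ ∑ y : Fin (N + 1) → A, ∏ n, P (y n) := Finset.sum_le_sum fun y _ =>
        mul_le_of_le_one_right (hdist.1 y) mul_inv_le_one
    _ = 1 := hdist.2
  rwa [← one_div, le_div_iff₀ (by positivity)]

theorem sum_prod_mul_card_succ_rpow_le (hP : IsDist P) (hb : 0 < P b) (N : ℕ) {α : ℝ}
    (hα : 0 ≤ α) (hα1 : α ≤ 1) :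
    ∑ y : Fin N → A, (∏ n, P (y n)) * ((Finset.card {n | y n = b} : ℝ) + 1) ^ (-α) ≤
      ((N + 1) * P b) ^ (-α) := by
  have hdist : IsDist fun y : Fin N → A => ∏ n, P (y n) := IsDist.pi fun _ => hP
  have hjensen := (concaveOn_rpow hα hα1).le_map_sum (t := Finset.univ)
    (p := fun y : Fin N → A => ((Finset.card {n | y n = b} : ℝ) + 1)⁻¹)
    (fun y _ => hdist.1 y) hdist.2 (fun y _ => Set.mem_Ici.mpr (by positivity))
  simp only [smul_eq_mul] at hjensen
  have hnonneg : ∀ y : Fin N → A, (0 : ℝ) ≤ (Finset.card {n | y n = b} : ℝ) + 1 := fun y => by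
    positivity
  calc ∑ y : Fin N → A, (∏ n, P (y n)) * ((Finset.card {n | y n = b} : ℝ) + 1) ^ (-α)
      = ∑ y : Fin N → A, (∏ n, P (y n)) * ((Finset.card {n | y n = b} : ℝ) + 1)⁻¹ ^ α := by
        simp only [rpow_neg (hnonneg _), inv_rpow (hnonneg _)]
    _ ≤ (∑ y : Fin N → A, (∏ n, P (y n)) * ((Finset.card {n | y n = b} : ℝ) + 1)⁻¹) ^ α := hjensen
    _ ≤ ((N + 1) * P b)⁻¹ ^ α := by
        refine rpow_le_rpow (Finset.sum_nonneg fun y _ => mul_nonneg (hdist.1 y) ?_)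
          (sum_prod_mul_inv_card_succ_le hP hb N) hα
        positivity
    _ = ((N + 1) * P b) ^ (-α) := by rw [rpow_neg (by positivity), inv_rpow (by positivity)]

end Product

section RandomCoding

variable {A B ι : Type*} [Fintype B]

/-- The error probability of the message `m` when the codebook `c` is decoded by maximum likelihood
over the channel `U`; ties count as errors. -/
noncomputable def mlError (U : A → B → ℝ) (c : ι → A) (m : ι) : ℝ :=
  ∑ y, U (c m) y * if ∃ m' ≠ m, U (c m) y ≤ U (c m') y then 1 else 0

theorem mlError_nonneg {U : A → B → ℝ} (hU : ∀ x y, 0 ≤ U x y) (c : ι → A) (m : ι) :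
    0 ≤ mlError U c m :=
  Finset.sum_nonneg fun y _ => mul_nonneg (hU _ y) (by split_ifs <;> norm_num)

theorem mlError_comp_embedding_le {κ : Type*} {U : A → B → ℝ} (hU : ∀ x y, 0 ≤ U x y) (c : ι → A)
    (g : κ ↪ ι) (m : κ) : mlError U (c ∘ g) m ≤ mlError U c (g m) := by
  refine Finset.sum_le_sum fun y _ => mul_le_mul_of_nonneg_left ?_ (hU _ y)
  have himp : (∃ m' ≠ m, U (c (g m)) y ≤ U (c (g m')) y) →
      ∃ m' ≠ g m, U (c (g m)) y ≤ U (c m') y :=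
    fun ⟨m', hne, hle⟩ => ⟨g m', g.injective.ne hne, hle⟩
  simp only [Function.comp_apply]
  split_ifs with h h'
  · exact le_rfl
  · exact absurd (himp h) h'
  · exact zero_le_one
  · exact le_rfl

theorem exists_Pmax_le_of_mlError_le {X Y : Type*} [Fintype X] [Fintype Y] {W : X → Y → ℝ}
    (hW : ∀ x y, 0 ≤ W x y) {M N : ℕ} (hM : 0 < M) {f : Fin M → Fin N → X} {ε : ℝ}
    (hf : ∀ m, mlError (Wn W) f m ≤ ε) :
    ∃ φ : (Fin N → Y) → Fin M, Pmax W f φ ≤ ε := by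
  have : Nonempty (Fin M) := ⟨⟨0, hM⟩⟩
  choose φ hφ using fun y : Fin N → Y => Finite.exists_max fun m => Wn W (f m) y
  refine ⟨φ, ciSup_le fun m => (Finset.sum_le_sum fun y _ => ?_).trans (hf m)⟩
  refine mul_le_mul_of_nonneg_left ?_ (Wn_nonneg hW _ y)
  by_cases h : φ y ≠ m
  · rw [if_pos h, if_pos ⟨φ y, h, hφ y m⟩]
  · rw [if_neg h]
    split_ifs <;> norm_num

variable [Fintype A] [Fintype ι]

/-- The contribution of one channel output to the random coding union bound, where the codewords
have distribution `P`, the output has likelihood `u x` given the codeword `x`, and the transmitted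
codeword has `K` competitors. -/
noncomputable def rcuTerm (P u : A → ℝ) (K : ℝ) : ℝ :=
  ∑ x, P x * u x * min 1 (K * ∑ z with u x ≤ u z, P z)

theorem rcuTerm_mono {P u : A → ℝ} (hP : ∀ x, 0 ≤ P x) (hu : ∀ x, 0 ≤ u x) :
    Monotone (rcuTerm P u) := fun K K' hK => by
  refine Finset.sum_le_sum fun x _ => mul_le_mul_of_nonneg_left ?_ (mul_nonneg (hP x) (hu x))
  gcongr
  exact Finset.sum_nonneg fun z _ => hP z

theorem IsDist.exists_le_sum_mul {P : A → ℝ} (hP : IsDist P) (g : A → ℝ) :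
    ∃ a, g a ≤ ∑ x, P x * g x := by
  have : Nonempty A := by
    by_contra h
    rw [not_nonempty_iff] at h
    simpa using hP.2
  obtain ⟨a, ha⟩ := Finite.exists_min g
  refine ⟨a, ?_⟩
  calc g a = ∑ x, P x * g a := by rw [← Finset.sum_mul, hP.2, one_mul]
    _ ≤ ∑ x, P x * g x := Finset.sum_le_sum fun x _ => mul_le_mul_of_nonneg_left (ha x) (hP.1 x)

variable {P : A → ℝ}

theorem sum_prod_mul_apply [DecidableEq ι] (hP : IsDist P) (j : ι) (g : A → ℝ) :
    ∑ r : ι → A, (∏ i, P (r i)) * g (r j) = ∑ a, P a * g a := by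
  have hfactor : ∀ r : ι → A, (∏ i, P (r i)) * g (r j) =
      ∏ i, P (r i) * if i = j then g (r i) else 1 := fun r => by
    rw [Finset.prod_mul_distrib, Finset.prod_ite_eq' Finset.univ j, if_pos (Finset.mem_univ j)]
  rw [Finset.sum_congr rfl fun r _ => hfactor r,
    ← Fintype.prod_sum fun i a => P a * if i = j then g a else 1, Finset.prod_eq_single j]
  · simp
  · intro i _ hi
    simp only [hi, if_false, mul_one, hP.2]
  · simp

theorem sum_prod_mul_exists_mem_le [DecidableEq ι] (hP : IsDist P) (S : Finset A) :
    ∑ r : ι → A, (∏ i, P (r i)) * (if ∃ i, r i ∈ S then 1 else 0) ≤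
      min 1 (Fintype.card ι * ∑ z ∈ S, P z) := by
  have hdist : IsDist fun r : ι → A => ∏ i, P (r i) := IsDist.pi fun _ => hP
  refine le_min ?_ ?_
  · refine (Finset.sum_le_sum fun r _ => mul_le_of_le_one_right (hdist.1 r) ?_).trans hdist.2.le
    split_ifs <;> norm_num
  have hunion : ∀ r : ι → A, (if ∃ i, r i ∈ S then 1 else 0) ≤
      ∑ i, if r i ∈ S then (1 : ℝ) else 0 := fun r => by
    have hnonneg : ∀ i ∈ Finset.univ, (0 : ℝ) ≤ if r i ∈ S then (1 : ℝ) else 0 := fun i _ => by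
      split_ifs <;> norm_num
    split_ifs with h
    · obtain ⟨i, hi⟩ := h
      simpa only [if_pos hi] using Finset.single_le_sum hnonneg (Finset.mem_univ i)
    · exact Finset.sum_nonneg hnonneg
  calc ∑ r : ι → A, (∏ i, P (r i)) * (if ∃ i, r i ∈ S then 1 else 0)
      ≤ ∑ r : ι → A, (∏ i, P (r i)) * ∑ i, if r i ∈ S then (1 : ℝ) else 0 :=
        Finset.sum_le_sum fun r _ => mul_le_mul_of_nonneg_left (hunion r) (hdist.1 r)
    _ = ∑ _i : ι, ∑ z, P z * if z ∈ S then (1 : ℝ) else 0 := by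
        simp only [Finset.mul_sum]
        rw [Finset.sum_comm]
        exact Finset.sum_congr rfl fun _ _ =>
          sum_prod_mul_apply hP _ fun z => if z ∈ S then 1 else 0
    _ = Fintype.card ι * ∑ z ∈ S, P z := by
        simp [Finset.card_univ]

theorem sum_prod_mul_mlError_le [DecidableEq ι] (hP : IsDist P) {U : A → B → ℝ}
    (hU : ∀ x y, 0 ≤ U x y) (m : ι) :
    ∑ c : ι → A, (∏ i, P (c i)) * mlError U c m ≤
      ∑ y, rcuTerm P (fun x => U x y) (Fintype.card ι - 1) := by
  have hcard : (Fintype.card {i // i ≠ m} : ℝ) = Fintype.card ι - 1 := by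
    rw [Fintype.card_subtype_compl, Fintype.card_subtype_eq,
      Nat.cast_sub (Fintype.card_pos_iff.mpr ⟨m⟩), Nat.cast_one]
  have herr : ∀ c : ι → A, mlError U c m =
      ∑ y, U (c m) y * if ∃ i : {i // i ≠ m}, c i ∈ ({z | U (c m) y ≤ U z y} : Finset A)
        then 1 else 0 := fun c => by
    unfold mlError
    congr! 3
    simp only [Finset.mem_filter_univ, Subtype.exists, exists_prop]
  calc ∑ c : ι → A, (∏ i, P (c i)) * mlError U c m
      = ∑ x, ∑ r : {i // i ≠ m} → A, P x * (∏ i, P (r i)) *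
          ∑ y, U x y * if ∃ i, r i ∈ ({z | U x y ≤ U z y} : Finset A) then 1 else 0 := by
        rw [← Fintype.sum_prod_type', ← (Equiv.funSplitAt m A).sum_comp]
        refine Finset.sum_congr rfl fun c _ => ?_
        rw [herr, Fintype.prod_eq_mul_prod_subtype_ne _ m]
        rfl
    _ = ∑ y, ∑ x, P x * U x y * ∑ r : {i // i ≠ m} → A, (∏ i, P (r i)) *
          if ∃ i, r i ∈ ({z | U x y ≤ U z y} : Finset A) then 1 else 0 := by
        symm
        rw [Finset.sum_comm]
        refine Finset.sum_congr rfl fun x _ => ?_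
        simp only [Finset.mul_sum]
        rw [Finset.sum_comm]
        refine Finset.sum_congr rfl fun r _ => Finset.sum_congr rfl fun y _ => ?_
        ring
    _ ≤ ∑ y, rcuTerm P (fun x => U x y) (Fintype.card ι - 1) := by
        refine Finset.sum_le_sum fun y _ => Finset.sum_le_sum fun x _ =>
          mul_le_mul_of_nonneg_left ?_ (mul_nonneg (hP.1 x) (hU x y))
        rw [← hcard]
        exact sum_prod_mul_exists_mem_le hP _

theorem exists_sum_mlError_le (hP : IsDist P) {U : A → B → ℝ} (hU : ∀ x y, 0 ≤ U x y) :
    ∃ c : ι → A, ∑ m, mlError U c m ≤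
      Fintype.card ι * ∑ y, rcuTerm P (fun x => U x y) (Fintype.card ι - 1) := by
  have hdist : IsDist fun c : ι → A => ∏ i, P (c i) := IsDist.pi fun _ => hP
  obtain ⟨c, hc⟩ := hdist.exists_le_sum_mul fun c => ∑ m, mlError U c m
  refine ⟨c, hc.trans ?_⟩
  calc ∑ c : ι → A, (∏ i, P (c i)) * ∑ m, mlError U c m
      = ∑ m, ∑ c : ι → A, (∏ i, P (c i)) * mlError U c m := by
        simp only [Finset.mul_sum]
        rw [Finset.sum_comm]
    _ ≤ ∑ _m : ι, ∑ y, rcuTerm P (fun x => U x y) (Fintype.card ι - 1) :=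
        Finset.sum_le_sum fun m _ => sum_prod_mul_mlError_le hP hU m
    _ = _ := by rw [Finset.sum_const, Finset.card_univ, nsmul_eq_mul]

theorem exists_embedding_le_two_mul {e : ι → ℝ} (he : ∀ i, 0 ≤ e i) {ε : ℝ} (hε : 0 < ε)
    (hsum : ∑ i, e i ≤ Fintype.card ι * ε) {M : ℕ} (hM : 2 * M ≤ Fintype.card ι + 1) :
    ∃ g : Fin M ↪ ι, ∀ m, e (g m) ≤ 2 * ε := by
  have hmarkov : 2 * Fintype.card {i // ¬e i ≤ 2 * ε} ≤ Fintype.card ι := by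
    have hbad : Finset.card {i | ¬e i ≤ 2 * ε} • (2 * ε) ≤ ∑ i, e i :=
      (Finset.card_nsmul_le_sum _ _ _ fun i hi =>
        (not_le.mp (Finset.mem_filter.mp hi).2).le).trans
        (Finset.sum_le_sum_of_subset_of_nonneg (Finset.subset_univ _) fun i _ _ => he i)
    rw [nsmul_eq_mul, ← Fintype.card_subtype] at hbad
    have : (2 * Fintype.card {i // ¬e i ≤ 2 * ε} : ℝ) * ε ≤ Fintype.card ι * ε := by linarith
    exact_mod_cast le_of_mul_le_mul_right this hε
  have hcompl := Fintype.card_subtype_compl fun i => e i ≤ 2 * ε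
  have hle : Fintype.card (Fin M) ≤ Fintype.card {i // e i ≤ 2 * ε} := by
    have := Fintype.card_subtype_le fun i => e i ≤ 2 * ε
    rw [Fintype.card_fin]
    omega
  obtain ⟨g⟩ := Function.Embedding.nonempty_of_card_le hle
  exact ⟨g.trans (Function.Embedding.subtype _), fun m => (g m).2⟩

theorem exists_code_Pmax_le_of_rcuTerm {X Y : Type*} [Fintype X] [Fintype Y] {W : X → Y → ℝ}
    (hW : ∀ x y, 0 ≤ W x y) {M N : ℕ} (hM : 0 < M) {P : (Fin N → X) → ℝ} (hP : IsDist P) {ε : ℝ}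
    (hε : 0 < ε) (h : ∑ y, rcuTerm P (fun x => Wn W x y) (2 * (M - 1)) ≤ ε) :
    ∃ (f : Fin M → Fin N → X) (φ : (Fin N → Y) → Fin M), Pmax W f φ ≤ 2 * ε := by
  have hWn : ∀ (x : Fin N → X) (y : Fin N → Y), 0 ≤ Wn W x y := Wn_nonneg hW
  have hcard : (Fintype.card (Fin (2 * M - 1)) : ℝ) - 1 = 2 * (M - 1) := by
    rw [Fintype.card_fin, Nat.cast_sub (by omega)]
    push_cast
    ring
  obtain ⟨c, hc⟩ := exists_sum_mlError_le (ι := Fin (2 * M - 1)) hP hWn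
  rw [hcard] at hc
  obtain ⟨g, hg⟩ := exists_embedding_le_two_mul (mlError_nonneg hWn c) hε
    (hc.trans (mul_le_mul_of_nonneg_left h (Nat.cast_nonneg _))) (M := M)
    (by rw [Fintype.card_fin]; omega)
  obtain ⟨φ, hφ⟩ := exists_Pmax_le_of_mlError_le hW hM fun m =>
    (mlError_comp_embedding_le hWn c g m).trans (hg m)
  exact ⟨c ∘ g, φ, hφ⟩

end RandomCoding

section Tilting

variable {A : Type*} [Fintype A] {P u : A → ℝ}

theorem exp_mul_min_one_exp_le (ρ a b : ℝ) :
    exp (ρ * a) * min 1 (exp (b - a)) ≤ exp (ρ * b) * exp (-(min ρ (1 - ρ)) * |a - b|) := by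
  rw [← exp_add]
  rcases le_total b a with h | h
  · refine (mul_le_mul_of_nonneg_left (min_le_right _ _) (exp_pos _).le).trans ?_
    rw [← exp_add, abs_of_nonneg (sub_nonneg.mpr h)]
    refine exp_le_exp.mpr ?_
    linarith [mul_le_mul_of_nonneg_right (min_le_right ρ (1 - ρ)) (sub_nonneg.mpr h)]
  · refine (mul_le_mul_of_nonneg_left (min_le_left _ _) (exp_pos _).le).trans ?_
    rw [mul_one, abs_of_nonpos (sub_nonpos.mpr h)]
    refine exp_le_exp.mpr ?_
    linarith [mul_le_mul_of_nonneg_right (min_le_left ρ (1 - ρ)) (sub_nonneg.mpr h)]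

theorem sum_filter_le_exp_mul (hP : ∀ x, 0 ≤ P x) (hu : ∀ x, 0 ≤ u x) {s B : ℝ} (hs : 0 < s)
    (hB : ∀ a, unitIntervalMass (fun x => P x * u x ^ s) (fun x => log (u x)) a ≤ B) {x : A}
    (hx : 0 < u x) :
    ∑ z with u x ≤ u z, P z ≤ exp (-(s * log (u x))) * (B * laplaceConst s) := by
  have hw : ∀ z, 0 ≤ P z * u z ^ s := fun z => mul_nonneg (hP z) (rpow_nonneg (hu z) s)
  have hterm : ∀ z ∈ ({z | u x ≤ u z} : Finset A), P z =
      exp (-(s * log (u x))) * (P z * u z ^ s * exp (-s * |log (u z) - log (u x)|)) := by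
    intro z hz
    have hxz : u x ≤ u z := (Finset.mem_filter.mp hz).2
    rw [abs_of_nonneg (sub_nonneg.mpr (log_le_log hx hxz)), rpow_def_of_pos (hx.trans_le hxz),
      mul_assoc, ← exp_add, mul_left_comm, ← exp_add]
    ring_nf
    rw [exp_zero, mul_one]
  rw [Finset.sum_congr rfl hterm, ← Finset.mul_sum]
  refine mul_le_mul_of_nonneg_left ?_ (exp_pos _).le
  exact (Finset.sum_le_sum_of_subset_of_nonneg (Finset.subset_univ _) fun z _ _ =>
    mul_nonneg (hw z) (exp_pos _).le).trans (sum_mul_exp_neg_mul_abs_le hw hs hB _)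

-- Tilting: `v = v ^ s * v ^ (ρ * s)`, and the second factor makes the left-hand side a two-sided
-- exponential in `log v`, centred where the bound `F ≤ 1` starts to hold.
theorem mul_min_one_le_rpow_mul_exp {s ρ τ v F : ℝ} (hs : 0 < s) (hsρ : s + ρ * s = 1) (hτ : 0 < τ)
    (hv : 0 < v) (hF : F ≤ exp (-(s * log v)) * τ) :
    v * min 1 F ≤ τ ^ ρ * (v ^ s * exp (-(min ρ (1 - ρ) * s) * |log v - log τ / s|)) := by
  have htilt : v = v ^ s * exp (ρ * (s * log v)) := by
    rw [rpow_def_of_pos hv, ← exp_add,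
      show log v * s + ρ * (s * log v) = (s + ρ * s) * log v by ring, hsρ, one_mul, exp_log hv]
  have hunion : F ≤ exp (log τ - s * log v) := by rwa [sub_eq_neg_add, exp_add, exp_log hτ]
  have hcentre : |s * log v - log τ| = s * |log v - log τ / s| := by
    rw [← abs_of_pos hs, ← abs_mul, abs_of_pos hs, mul_sub, mul_div_cancel₀ _ hs.ne']
  calc v * min 1 F = v ^ s * (exp (ρ * (s * log v)) * min 1 F) := by rw [← mul_assoc, ← htilt]
    _ ≤ v ^ s * (exp (ρ * log τ) * exp (-(min ρ (1 - ρ)) * |s * log v - log τ|)) := by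
        refine mul_le_mul_of_nonneg_left (le_trans ?_ (exp_mul_min_one_exp_le ρ _ _))
          (rpow_nonneg hv.le s)
        gcongr
    _ = τ ^ ρ * (v ^ s * exp (-(min ρ (1 - ρ) * s) * |log v - log τ / s|)) := by
        rw [rpow_def_of_pos hτ, mul_comm (log τ), hcentre, ← mul_assoc (-min ρ (1 - ρ)), ← neg_mul]
        ring

theorem rcuTerm_le (hP : ∀ x, 0 ≤ P x) (hu : ∀ x, 0 ≤ u x) {ρ K B : ℝ} (hρ : 0 < ρ) (hρ1 : ρ < 1)
    (hK : 0 < K)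
    (hB : ∀ a, unitIntervalMass (fun x => P x * u x ^ (1 / (1 + ρ))) (fun x => log (u x)) a ≤ B) :
    rcuTerm P u K ≤ laplaceConst (1 / (1 + ρ)) ^ ρ *
      laplaceConst (min ρ (1 - ρ) * (1 / (1 + ρ))) * K ^ ρ * B ^ (1 + ρ) := by
  have hsρ : 1 / (1 + ρ) + ρ * (1 / (1 + ρ)) = 1 := by field_simp
  have hs : 0 < 1 / (1 + ρ) := by positivity
  set s := 1 / (1 + ρ)
  set κ := min ρ (1 - ρ) * s
  have hκ : 0 < κ := mul_pos (lt_min hρ (sub_pos.mpr hρ1)) hs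
  have hL := laplaceConst_pos hs
  have hw : ∀ x, 0 ≤ P x * u x ^ s := fun x => mul_nonneg (hP x) (rpow_nonneg (hu x) s)
  have hB0 : 0 ≤ B := (unitIntervalMass_nonneg hw _ 0).trans (hB 0)
  rcases hB0.eq_or_lt with rfl | hBpos
  · rw [zero_rpow (by positivity), mul_zero]
    refine (Finset.sum_eq_zero fun x _ => ?_).le
    have hPu : P x * u x ^ s = 0 := ((le_unitIntervalMass hw _ x).trans (hB _)).antisymm (hw x)
    rcases mul_eq_zero.mp hPu with h | h
    · rw [h, zero_mul, zero_mul]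
    · rw [(rpow_eq_zero (hu x) hs.ne').mp h, mul_zero, zero_mul]
  set τ := K * (B * laplaceConst s) with hτ
  have hτ0 : 0 < τ := by positivity
  have hterm : ∀ x, P x * u x * min 1 (K * ∑ z with u x ≤ u z, P z) ≤
      τ ^ ρ * (P x * u x ^ s * exp (-κ * |log (u x) - log τ / s|)) := fun x => by
    rcases (hu x).eq_or_lt with hx | hx
    · rw [← hx, mul_zero, zero_mul, zero_rpow hs.ne', mul_zero, zero_mul, mul_zero]
    rw [mul_assoc, mul_assoc, mul_left_comm (τ ^ ρ)]
    refine mul_le_mul_of_nonneg_left (mul_min_one_le_rpow_mul_exp hs hsρ hτ0 hx ?_) (hP x)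
    rw [hτ, mul_left_comm (exp _)]
    exact mul_le_mul_of_nonneg_left (sum_filter_le_exp_mul hP hu hs hB hx) hK.le
  calc rcuTerm P u K ≤ τ ^ ρ * ∑ x, P x * u x ^ s * exp (-κ * |log (u x) - log τ / s|) := by
        rw [Finset.mul_sum]
        exact Finset.sum_le_sum fun x _ => hterm x
    _ ≤ τ ^ ρ * (B * laplaceConst κ) := by
        gcongr
        exact sum_mul_exp_neg_mul_abs_le hw hκ hB _
    _ = laplaceConst s ^ ρ * laplaceConst κ * K ^ ρ * B ^ (1 + ρ) := by
        rw [hτ, mul_rpow hK.le (by positivity), mul_rpow hB0 hL.le, rpow_add hBpos, rpow_one]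
        ring

end Tilting

section Ensemble

variable {X Y : Type*} [Fintype X] {W : X → Y → ℝ} {Q : X → ℝ}

/-- The total mass at the output `y` of the input distribution tilted by the power `1 / (1 + ρ)` of
the likelihood: the inner sum of Gallager's function. -/
noncomputable def tiltedMass (W : X → Y → ℝ) (Q : X → ℝ) (ρ : ℝ) (y : Y) : ℝ :=
  ∑ x, Q x * W x y ^ (1 / (1 + ρ))

theorem tiltedMass_nonneg (hW : ∀ x y, 0 ≤ W x y) (hQ : ∀ x, 0 ≤ Q x) (ρ : ℝ) (y : Y) :
    0 ≤ tiltedMass W Q ρ y :=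
  Finset.sum_nonneg fun x _ => mul_nonneg (hQ x) (rpow_nonneg (hW x y) _)

theorem tiltedMass_pos (hW : ∀ x y, 0 ≤ W x y) (hQ : ∀ x, 0 ≤ Q x) (ρ : ℝ) {x : X} {y : Y}
    (h : 0 < Q x * W x y) : 0 < tiltedMass W Q ρ y :=
  Finset.sum_pos' (fun x _ => mul_nonneg (hQ x) (rpow_nonneg (hW x y) _)) ⟨x, Finset.mem_univ x,
    mul_pos (pos_of_mul_pos_left h (hW x y)) (rpow_pos_of_pos (pos_of_mul_pos_right h (hQ x)) _)⟩

theorem exists_norm_charSum_log_le_exp (hW : ∀ x y, 0 ≤ W x y) (hQ : ∀ x, 0 ≤ Q x)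
    (hns : ¬Singular W Q) (ρ : ℝ) :
    ∃ (b : Y) (c δ : ℝ), 0 < tiltedMass W Q ρ b ∧ 0 < c ∧ 0 < δ ∧ δ ≤ 1 ∧ ∀ t, |t| ≤ δ →
      ‖charSum (fun x => Q x * W x b ^ (1 / (1 + ρ))) (fun x => log (W x b)) t‖ ≤
        tiltedMass W Q ρ b * exp (-(c * t ^ 2)) := by
  obtain ⟨x₁, b, x₂, hpos, hne⟩ : ∃ x y z, 0 < Q x * W x y * (Q z * W z y) ∧ W x y ≠ W z y := by
    simpa only [Singular, not_forall, exists_prop] using hns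
  have hweight : ∀ x, 0 ≤ Q x * W x b := fun x => mul_nonneg (hQ x) (hW x b)
  have h₁ := pos_of_mul_pos_left hpos (hweight x₂)
  have h₂ := pos_of_mul_pos_right hpos (hweight x₁)
  have hW₁ := pos_of_mul_pos_right h₁ (hQ x₁)
  have hW₂ := pos_of_mul_pos_right h₂ (hQ x₂)
  obtain ⟨c, δ, h⟩ := exists_norm_charSum_le_exp
    (p := fun x => Q x * W x b ^ (1 / (1 + ρ))) (V := fun x => log (W x b))
    (fun x => mul_nonneg (hQ x) (rpow_nonneg (hW x b) _))
    (mul_pos (pos_of_mul_pos_left h₁ hW₁.le) (rpow_pos_of_pos hW₁ _))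
    (mul_pos (pos_of_mul_pos_left h₂ hW₂.le) (rpow_pos_of_pos hW₂ _))
    fun hlog => hne (log_injOn_pos hW₁ hW₂ hlog)
  exact ⟨b, c, δ, tiltedMass_pos hW hQ ρ h₁, h⟩

theorem unitIntervalMass_log_Wn_le (hW : ∀ x y, 0 ≤ W x y) (hQ : ∀ x, 0 ≤ Q x) {ρ c δ : ℝ}
    (hρ : -1 < ρ) (hc : 0 < c) (hδ : 0 < δ) (hδ1 : δ ≤ 1) {b : Y}
    (hb : ∀ t, |t| ≤ δ →
      ‖charSum (fun x => Q x * W x b ^ (1 / (1 + ρ))) (fun x => log (W x b)) t‖ ≤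
        tiltedMass W Q ρ b * exp (-(c * t ^ 2))) {N : ℕ} (y : Fin N → Y) (a : ℝ) :
    unitIntervalMass (fun x : Fin N → X => (∏ n, Q (x n)) * Wn W x y ^ (1 / (1 + ρ)))
        (fun x => log (Wn W x y)) a ≤
      8 * laplaceConst (c * δ ^ 2) * (∏ n, tiltedMass W Q ρ (y n)) /
        √((Finset.card {n | y n = b} : ℝ) + 1) := by
  have hweight : ∀ x : Fin N → X, (∏ n, Q (x n)) * Wn W x y ^ (1 / (1 + ρ)) =
      ∏ n, Q (x n) * W (x n) (y n) ^ (1 / (1 + ρ)) := fun x => by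
    rw [Finset.prod_mul_distrib, Wn, finsetProd_rpow _ _ fun n _ => hW (x n) (y n)]
  have hlog : ∀ x : Fin N → X, (∏ n, Q (x n)) * Wn W x y ^ (1 / (1 + ρ)) ≠ 0 →
      log (Wn W x y) = ∑ n, log (W (x n) (y n)) := fun x hx => by
    refine log_prod fun n _ hn => right_ne_zero_of_mul hx ?_
    rw [Wn, Finset.prod_eq_zero (Finset.mem_univ n) hn,
      zero_rpow (one_div_pos.mpr (by linarith)).ne']
  have hS : ∀ n ∈ ({n | y n = b} : Finset (Fin N)), ∀ t, |t| ≤ δ →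
      ‖charSum (fun x => Q x * W x (y n) ^ (1 / (1 + ρ))) (fun x => log (W x (y n))) t‖ ≤
        tiltedMass W Q ρ (y n) * exp (-(c * t ^ 2)) := fun n hn => by
    rw [(Finset.mem_filter.mp hn).2]
    exact hb
  rw [unitIntervalMass_congr hlog, funext hweight]
  exact unitIntervalMass_pi_le (p := fun n x => Q x * W x (y n) ^ (1 / (1 + ρ)))
    (V := fun n x => log (W x (y n)))
    (fun n x => mul_nonneg (hQ x) (rpow_nonneg (hW x (y n)) _)) hc hδ hδ1 hS a

variable [Fintype Y]

/-- The sum inside the logarithm of Gallager's function `Eo`. -/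
noncomputable def gallagerSum (W : X → Y → ℝ) (Q : X → ℝ) (ρ : ℝ) : ℝ :=
  ∑ y, tiltedMass W Q ρ y ^ (1 + ρ)

theorem Eo_eq_neg_log_gallagerSum (W : X → Y → ℝ) (ρ : ℝ) (Q : X → ℝ) :
    Eo W ρ Q = -log (gallagerSum W Q ρ) := rfl

theorem gallagerSum_pos_of_tiltedMass_pos (hW : ∀ x y, 0 ≤ W x y) (hQ : ∀ x, 0 ≤ Q x) {ρ : ℝ}
    {y : Y} (hy : 0 < tiltedMass W Q ρ y) : 0 < gallagerSum W Q ρ :=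
  Finset.sum_pos' (fun y _ => rpow_nonneg (tiltedMass_nonneg hW hQ ρ y) _)
    ⟨y, Finset.mem_univ y, rpow_pos_of_pos hy _⟩

theorem isDist_fRho (hW : ∀ x y, 0 ≤ W x y) (hQ : ∀ x, 0 ≤ Q x) {ρ : ℝ}
    (h : 0 < gallagerSum W Q ρ) : IsDist (fRho W Q ρ) :=
  ⟨fun y => div_nonneg (rpow_nonneg (tiltedMass_nonneg hW hQ ρ y) _) h.le, by
    simp only [fRho]
    rw [← Finset.sum_div]
    exact div_self h.ne'⟩

theorem prod_tiltedMass_rpow (hW : ∀ x y, 0 ≤ W x y) (hQ : ∀ x, 0 ≤ Q x) {ρ : ℝ}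
    (h : 0 < gallagerSum W Q ρ) {N : ℕ} (y : Fin N → Y) :
    (∏ n, tiltedMass W Q ρ (y n)) ^ (1 + ρ) =
      gallagerSum W Q ρ ^ N * ∏ n, fRho W Q ρ (y n) := by
  have hletter : ∀ n, tiltedMass W Q ρ (y n) ^ (1 + ρ) =
      gallagerSum W Q ρ * fRho W Q ρ (y n) := fun n => (mul_div_cancel₀ _ h.ne').symm
  rw [← finsetProd_rpow _ _ fun n _ => tiltedMass_nonneg hW hQ ρ (y n)]
  simp only [hletter, Finset.prod_mul_distrib, Finset.prod_const, Finset.card_univ,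
    Fintype.card_fin]

theorem exp_neg_mul_Eo {ρ : ℝ} (h : 0 < gallagerSum W Q ρ) (N : ℕ) :
    exp (-(N : ℝ) * Eo W ρ Q) = gallagerSum W Q ρ ^ N := by
  rw [Eo_eq_neg_log_gallagerSum, neg_mul_neg, exp_nat_mul, exp_log h]

theorem exists_sum_rcuTerm_Wn_le (hW : ∀ x y, 0 ≤ W x y) (hQ : ∀ x, 0 ≤ Q x)
    (hns : ¬Singular W Q) {ρ : ℝ} (hρ : 0 < ρ) (hρ1 : ρ < 1) :
    ∃ C, 0 < C ∧ ∀ (N : ℕ) (K : ℝ), 0 < K →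
      ∑ y : Fin N → Y, rcuTerm (fun x : Fin N → X => ∏ n, Q (x n)) (fun x => Wn W x y) K ≤
        C * K ^ ρ * ((N : ℝ) + 1) ^ (-(1 + ρ) / 2) * exp (-(N : ℝ) * Eo W ρ Q) := by
  obtain ⟨b, c, δ, hb, hc, hδ, hδ1, hchar⟩ := exists_norm_charSum_log_le_exp hW hQ hns ρ
  have hΦ := gallagerSum_pos_of_tiltedMass_pos hW hQ hb
  have hf := isDist_fRho hW hQ hΦ
  have hfb : 0 < fRho W Q ρ b := div_pos (rpow_pos_of_pos hb _) hΦ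
  set D := 8 * laplaceConst (c * δ ^ 2)
  set L := laplaceConst (1 / (1 + ρ)) ^ ρ * laplaceConst (min ρ (1 - ρ) * (1 / (1 + ρ)))
  have hD : 0 < D := mul_pos (by norm_num) (laplaceConst_pos (by positivity))
  have hL : 0 < L := mul_pos (rpow_pos_of_pos (laplaceConst_pos (by positivity)) _)
    (laplaceConst_pos (mul_pos (lt_min hρ (sub_pos.mpr hρ1)) (by positivity)))
  refine ⟨L * D ^ (1 + ρ) * fRho W Q ρ b ^ (-((1 + ρ) / 2)), by positivity, fun N K hK => ?_⟩
  have houtput : ∀ y : Fin N → Y,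
      rcuTerm (fun x : Fin N → X => ∏ n, Q (x n)) (fun x => Wn W x y) K ≤
        L * K ^ ρ * D ^ (1 + ρ) * gallagerSum W Q ρ ^ N * ((∏ n, fRho W Q ρ (y n)) *
          ((Finset.card {n | y n = b} : ℝ) + 1) ^ (-((1 + ρ) / 2))) := fun y => by
    refine (rcuTerm_le (fun x => Finset.prod_nonneg fun n _ => hQ (x n))
      (fun x => Wn_nonneg hW x y) hρ hρ1 hK
      (unitIntervalMass_log_Wn_le hW hQ (by linarith) hc hδ hδ1 hchar y)).trans_eq ?_
    have hcount : (0 : ℝ) < (Finset.card {n | y n = b} : ℝ) + 1 := by positivity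
    have hprod := Finset.prod_nonneg (s := Finset.univ) fun n _ => tiltedMass_nonneg hW hQ ρ (y n)
    rw [div_rpow (mul_nonneg hD.le hprod) (sqrt_nonneg _), mul_rpow hD.le hprod,
      prod_tiltedMass_rpow hW hQ hΦ, sqrt_eq_rpow, ← rpow_mul hcount.le, rpow_neg hcount.le,
      one_div_mul_eq_div]
    ring
  calc ∑ y : Fin N → Y, rcuTerm (fun x : Fin N → X => ∏ n, Q (x n)) (fun x => Wn W x y) K
      ≤ L * K ^ ρ * D ^ (1 + ρ) * gallagerSum W Q ρ ^ N *
          ((N + 1) * fRho W Q ρ b) ^ (-((1 + ρ) / 2)) := by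
        refine (Finset.sum_le_sum fun y _ => houtput y).trans ?_
        rw [← Finset.mul_sum]
        gcongr
        exact sum_prod_mul_card_succ_rpow_le hf hfb N (by linarith) (by linarith)
    _ = _ := by
        rw [exp_neg_mul_Eo hΦ, mul_rpow (by positivity) hfb.le, neg_div]
        ring

theorem exists_code_Pmax_le (hW : ∀ x y, 0 ≤ W x y) (hQ : IsDist Q) (hns : ¬Singular W Q) {ρ : ℝ}
    (hρ : 0 < ρ) (hρ1 : ρ < 1) :
    ∃ C, 0 < C ∧ ∀ (R : ℝ) (N : ℕ),
      ∃ (f : Fin (nMsgs N R) → Fin N → X) (φ : (Fin N → Y) → Fin (nMsgs N R)),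
        Pmax W f φ ≤
          C * ((N : ℝ) + 1) ^ (-(1 + ρ) / 2) * exp (-(N : ℝ) * (-ρ * R + Eo W ρ Q)) := by
  obtain ⟨C, hC, hbound⟩ := exists_sum_rcuTerm_Wn_le hW hQ.1 hns hρ hρ1
  refine ⟨2 * (C * 2 ^ ρ), by positivity, fun R N => ?_⟩
  have hM : 0 < nMsgs N R := Nat.ceil_pos.mpr (exp_pos _)
  have hcompetitors : 2 * ((nMsgs N R : ℝ) - 1) ≤ 2 * exp (N * R) := by
    rw [nMsgs]
    linarith [Nat.ceil_lt_add_one (exp_pos (N * R)).le]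
  have hdist : IsDist fun x : Fin N → X => ∏ n, Q (x n) := IsDist.pi fun _ => hQ
  have hrate : (2 * exp (N * R)) ^ ρ * exp (-(N : ℝ) * Eo W ρ Q) =
      2 ^ ρ * exp (-(N : ℝ) * (-ρ * R + Eo W ρ Q)) := by
    rw [mul_rpow zero_le_two (exp_pos _).le, ← exp_mul, mul_assoc, ← exp_add]
    ring_nf
  obtain ⟨f, φ, hfφ⟩ := exists_code_Pmax_le_of_rcuTerm hW hM hdist
    (ε := C * (2 * exp (N * R)) ^ ρ * ((N : ℝ) + 1) ^ (-(1 + ρ) / 2) *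
      exp (-(N : ℝ) * Eo W ρ Q)) (by positivity)
    ((Finset.sum_le_sum fun y _ => rcuTerm_mono hdist.1 (fun x => Wn_nonneg hW x y)
      hcompetitors).trans (hbound N _ (by positivity)))
  refine ⟨f, φ, hfφ.trans_eq ?_⟩
  rw [mul_right_comm C, mul_assoc (C * _), hrate]
  ring

end Ensemble

section Subgradients

variable {f g : ℝ → ℝ} {R v : ℝ}

theorem Subderiv_subset_of_le (hfg : ∀ x, f x ≤ g x) (hR : f R = g R) :
    Subderiv f R ⊆ Subderiv g R :=
  fun _ hv x => (hR ▸ hv x).trans (hfg x)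

theorem abs_le_of_mem_Subderiv {K : NNReal} (hf : LipschitzWith K f) (hv : v ∈ Subderiv f R) :
    |v| ≤ K := by
  have hstep : ∀ h : ℝ, |h| = 1 → v * h ≤ K := fun h hh => by
    have hsub := hv (R + h)
    have hlip := (le_abs_self _).trans (hf.dist_le_mul (R + h) R)
    rw [dist_eq, add_sub_cancel_left, hh, mul_one] at hlip
    rw [add_sub_cancel_left] at hsub
    linarith
  have hright := hstep 1 abs_one
  have hleft := hstep (-1) (by rw [abs_neg, abs_one])
  exact abs_le.mpr ⟨by linarith, by linarith⟩

theorem deriv_eq_of_mem_Subderiv (hf : DifferentiableAt ℝ f R) (hv : v ∈ Subderiv f R) :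
    deriv f R = v := by
  have hmin : IsLocalMin (fun x => f x - v * x) R := Filter.Eventually.of_forall fun x => by
    linarith [hv x]
  have hzero := hmin.hasDerivAt_eq_zero (hf.hasDerivAt.sub ((hasDerivAt_id R).const_mul v))
  linarith

end Subgradients

section Exponents

variable {X Y : Type*} [Fintype X] {W : X → Y → ℝ} {Q : X → ℝ} {R ρ : ℝ}

theorem hasDerivAt_rpow_one_div {a : ℝ} (ha : 0 ≤ a) :
    HasDerivAt (fun ρ : ℝ => a ^ (1 / (1 + ρ))) (-(a * log a)) 0 := by
  rcases ha.eq_or_lt with rfl | ha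
  · have hzero : (fun ρ : ℝ => (0 : ℝ) ^ (1 / (1 + ρ))) =ᶠ[nhds 0] fun _ => 0 := by
      filter_upwards [lt_mem_nhds (show (-1 : ℝ) < 0 by norm_num)] with ρ hρ
      exact zero_rpow (one_div_pos.mpr (by linarith)).ne'
    simpa only [zero_mul, neg_zero] using
      (hasDerivAt_const (0 : ℝ) (0 : ℝ)).congr_of_eventuallyEq hzero
  · have hinv : HasDerivAt (fun ρ : ℝ => 1 / (1 + ρ)) (-1) 0 := by
      simpa [one_div] using ((hasDerivAt_id (0 : ℝ)).const_add 1).fun_inv (by norm_num)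
    exact (hinv.const_rpow ha).congr_deriv (by simp [mul_comm])

theorem tiltedMass_eq_zero (hρ : -1 < ρ) {y : Y} (h : ∀ x, Q x * W x y = 0) :
    tiltedMass W Q ρ y = 0 :=
  Finset.sum_eq_zero fun x _ => (mul_eq_zero.mp (h x)).elim (fun hQ => by rw [hQ, zero_mul])
    fun hW => by rw [hW, zero_rpow (one_div_pos.mpr (by linarith)).ne', mul_zero]

theorem hasDerivAt_tiltedMass_rpow (hW : ∀ x y, 0 ≤ W x y) (hQ : ∀ x, 0 ≤ Q x) (y : Y) :
    HasDerivAt (fun ρ : ℝ => tiltedMass W Q ρ y ^ (1 + ρ))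
      (-(∑ x, Q x * W x y * log (W x y / ∑ x', Q x' * W x' y))) 0 := by
  set q := ∑ x, Q x * W x y with hq
  have hjoint : ∀ x, 0 ≤ Q x * W x y := fun x => mul_nonneg (hQ x) (hW x y)
  have hq_nonneg : 0 ≤ q := Finset.sum_nonneg fun x _ => hjoint x
  rcases hq_nonneg.eq_or_lt with hq0 | hq0
  · have hzero : ∀ x, Q x * W x y = 0 := fun x =>
      (Finset.sum_eq_zero_iff_of_nonneg fun x _ => hjoint x).mp hq0.symm x (Finset.mem_univ x)
    have heq : (fun ρ : ℝ => tiltedMass W Q ρ y ^ (1 + ρ)) =ᶠ[nhds 0] fun _ => 0 := by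
      filter_upwards [lt_mem_nhds (show (-1 : ℝ) < 0 by norm_num)] with ρ hρ
      rw [tiltedMass_eq_zero hρ hzero, zero_rpow (by linarith)]
    simpa only [hzero, zero_mul, Finset.sum_const_zero, neg_zero] using
      (hasDerivAt_const (0 : ℝ) (0 : ℝ)).congr_of_eventuallyEq heq
  · have hmass : HasDerivAt (fun ρ : ℝ => tiltedMass W Q ρ y)
        (∑ x, Q x * -(W x y * log (W x y))) 0 :=
      HasDerivAt.fun_sum fun x _ => (hasDerivAt_rpow_one_div (hW x y)).const_mul (Q x)
    have hmass_zero : tiltedMass W Q 0 y = q := by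
      simp only [tiltedMass, add_zero, div_one, rpow_one, hq]
    have hlog : ∀ x, Q x * W x y * log (W x y / q) =
        -(Q x * -(W x y * log (W x y))) - Q x * W x y * log q := fun x => by
      rcases (hW x y).eq_or_lt with h | h
      · simp only [← h, mul_zero, zero_mul, neg_zero, sub_zero]
      · rw [log_div h.ne' hq0.ne']
        ring
    refine (hmass.rpow ((hasDerivAt_id (0 : ℝ)).const_add 1)
      (by rwa [hmass_zero])).congr_deriv ?_
    simp only [id, hmass_zero, add_zero, sub_self, rpow_zero, rpow_one, hlog, mul_one, one_mul,
      Finset.sum_sub_distrib, Finset.sum_neg_distrib, ← Finset.sum_mul, ← hq]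
    ring

variable [Fintype Y]

theorem sum_output_eq_one (hW : IsChannel W) (hQ : IsDist Q) : ∑ y, ∑ x, Q x * W x y = 1 := by
  rw [Finset.sum_comm]
  simp only [← Finset.mul_sum, hW.2, mul_one, hQ.2]

theorem IsChannel.sum_mul_le_tiltedMass (hW : IsChannel W) (hQ : ∀ x, 0 ≤ Q x) (hρ : 0 ≤ ρ)
    (y : Y) : ∑ x, Q x * W x y ≤ tiltedMass W Q ρ y := by
  refine Finset.sum_le_sum fun x _ => mul_le_mul_of_nonneg_left ?_ (hQ x)
  have hle_one : W x y ≤ 1 :=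
    (Finset.single_le_sum (fun z _ => hW.1 x z) (Finset.mem_univ y)).trans_eq (hW.2 x)
  refine self_le_rpow_of_le_one (hW.1 x y) hle_one ?_
  rw [div_le_one (by linarith)]
  linarith

theorem one_le_card_rpow_mul_gallagerSum (hW : IsChannel W) (hQ : IsDist Q) (hρ : 0 ≤ ρ) :
    1 ≤ (Fintype.card Y : ℝ) ^ ρ * gallagerSum W Q ρ := calc
  (1 : ℝ) = (∑ y, ∑ x, Q x * W x y) ^ (1 + ρ) := by rw [sum_output_eq_one hW hQ, one_rpow]
  _ ≤ (∑ y, tiltedMass W Q ρ y) ^ (1 + ρ) := by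
    refine rpow_le_rpow (by rw [sum_output_eq_one hW hQ]; exact zero_le_one)
      (Finset.sum_le_sum fun y _ => hW.sum_mul_le_tiltedMass hQ.1 hρ y) (by linarith)
  _ ≤ (Fintype.card Y : ℝ) ^ (1 + ρ - 1) * gallagerSum W Q ρ :=
    rpow_sum_le_const_mul_sum_rpow_of_nonneg _ (by linarith) fun y _ =>
      tiltedMass_nonneg hW.1 hQ.1 ρ y
  _ = (Fintype.card Y : ℝ) ^ ρ * gallagerSum W Q ρ := by rw [add_sub_cancel_left]

theorem gallagerSum_pos (hW : IsChannel W) (hQ : IsDist Q) (hρ : 0 ≤ ρ) :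
    0 < gallagerSum W Q ρ :=
  pos_of_mul_pos_right (zero_lt_one.trans_le (one_le_card_rpow_mul_gallagerSum hW hQ hρ))
    (rpow_nonneg (Nat.cast_nonneg _) ρ)

theorem Eo_le_mul_log_card (hW : IsChannel W) (hQ : IsDist Q) (hρ : 0 ≤ ρ) :
    Eo W ρ Q ≤ ρ * log (Fintype.card Y) := by
  have hΦ := gallagerSum_pos hW hQ hρ
  have hone := one_le_card_rpow_mul_gallagerSum hW hQ hρ
  have hcard : (0 : ℝ) < Fintype.card Y := by
    have : Nonempty Y := not_isEmpty_iff.mp fun _ => by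
      simpa using sum_output_eq_one hW hQ
    exact Nat.cast_pos.mpr Fintype.card_pos
  have hlog := log_nonneg hone
  rw [log_mul (rpow_pos_of_pos hcard ρ).ne' hΦ.ne', log_rpow hcard] at hlog
  rw [Eo_eq_neg_log_gallagerSum]
  linarith

theorem Eo_zero (hW : IsChannel W) (hQ : IsDist Q) : Eo W 0 Q = 0 := by
  simp only [Eo, add_zero, div_one, rpow_one, sum_output_eq_one hW hQ, log_one, neg_zero]

theorem continuousOn_Eo (hW : IsChannel W) (hQ : IsDist Q) :
    ContinuousOn (fun ρ => Eo W ρ Q) (Set.Ici 0) := by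
  have hpos : ∀ ρ ∈ Set.Ici (0 : ℝ), 0 < 1 + ρ := fun ρ hρ => by linarith [Set.mem_Ici.mp hρ]
  refine (ContinuousOn.log ?_ fun ρ hρ => (gallagerSum_pos hW hQ hρ).ne').neg
  refine continuousOn_finsetSum _ fun y _ => ?_
  refine ContinuousOn.rpow ?_ (by fun_prop) fun ρ hρ => Or.inr (hpos ρ hρ)
  refine continuousOn_finsetSum _ fun x _ => continuousOn_const.mul ?_
  exact continuousOn_const.rpow
    (continuousOn_const.div (by fun_prop) fun ρ hρ => (hpos ρ hρ).ne')
    fun ρ hρ => Or.inr (one_div_pos.mpr (hpos ρ hρ))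

theorem neg_mul_add_Eo_le (hW : IsChannel W) (hQ : IsDist Q) (R : ℝ) (hρ : ρ ∈ Set.Icc 0 1) :
    -ρ * R + Eo W ρ Q ≤ |R| + log (Fintype.card Y) := by
  have hrate : ρ * -R ≤ |R| :=
    (mul_le_mul_of_nonneg_left (neg_le_abs R) hρ.1).trans
      (mul_le_of_le_one_left (abs_nonneg R) hρ.2)
  linarith [Eo_le_mul_log_card hW hQ hρ.1,
    mul_le_of_le_one_left (log_natCast_nonneg (Fintype.card Y)) hρ.2]

theorem le_ErQ (hW : IsChannel W) (hQ : IsDist Q) (R : ℝ) (hρ : ρ ∈ Set.Icc 0 1) :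
    -ρ * R + Eo W ρ Q ≤ ErQ W R Q := by
  refine le_csSup ⟨|R| + log (Fintype.card Y), ?_⟩ (Set.mem_image_of_mem _ hρ)
  rintro _ ⟨ρ', hρ', rfl⟩
  exact neg_mul_add_Eo_le hW hQ R hρ'

theorem exists_ErQ_eq (hW : IsChannel W) (hQ : IsDist Q) (R : ℝ) :
    ∃ ρ ∈ Set.Icc (0 : ℝ) 1, ErQ W R Q = -ρ * R + Eo W ρ Q :=
  isCompact_Icc.exists_sSup_image_eq (Set.nonempty_Icc.mpr zero_le_one)
    (ContinuousOn.add (by fun_prop) ((continuousOn_Eo hW hQ).mono Set.Icc_subset_Ici_self))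

theorem ErQ_le_Er (hW : IsChannel W) (hQ : IsDist Q) (R : ℝ) : ErQ W R Q ≤ Er W R := by
  refine le_csSup ⟨|R| + log (Fintype.card Y), ?_⟩ ⟨Q, hQ, rfl⟩
  rintro _ ⟨Q', hQ', rfl⟩
  obtain ⟨ρ, hρ, h⟩ := exists_ErQ_eq hW hQ' R
  exact h.trans_le (neg_mul_add_Eo_le hW hQ' R hρ)

theorem neg_mul_add_Eo_le_Er (hW : IsChannel W) (hQ : IsDist Q) (R : ℝ) (hρ : ρ ∈ Set.Icc 0 1) :
    -ρ * R + Eo W ρ Q ≤ Er W R :=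
  (le_ErQ hW hQ R hρ).trans (ErQ_le_Er hW hQ R)

theorem exists_isDist (X : Type*) [Fintype X] [Nonempty X] : ∃ Q : X → ℝ, IsDist Q :=
  ⟨fun x => if x = Classical.arbitrary X then 1 else 0, fun _ => ite_nonneg zero_le_one le_rfl,
    by simp⟩

theorem lipschitzWith_one_Er [Nonempty X] (hW : IsChannel W) : LipschitzWith 1 (Er W) := by
  refine LipschitzWith.of_le_add fun x R => ?_
  obtain ⟨Q₀, hQ₀⟩ := exists_isDist X
  refine csSup_le ⟨_, Q₀, hQ₀, rfl⟩ ?_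
  rintro _ ⟨Q, hQ, rfl⟩
  obtain ⟨ρ, hρ, h⟩ := exists_ErQ_eq hW hQ x
  have hshift : ρ * (R - x) ≤ dist x R := by
    rw [dist_comm, dist_eq]
    exact (mul_le_mul_of_nonneg_left (le_abs_self _) hρ.1).trans
      (mul_le_of_le_one_left (abs_nonneg _) hρ.2)
  rw [h]
  linarith [neg_mul_add_Eo_le_Er hW hQ R hρ]

theorem neg_mem_Subderiv_ErQ (hW : IsChannel W) (hQ : IsDist Q) (hρ : ρ ∈ Set.Icc 0 1)
    (hopt : ErQ W R Q = -ρ * R + Eo W ρ Q) : -ρ ∈ Subderiv (fun a => ErQ W a Q) R := fun x => by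
  linarith [le_ErQ hW hQ x hρ]

theorem hasDerivAt_Eo_zero (hW : IsChannel W) (hQ : IsDist Q) :
    HasDerivAt (fun ρ => Eo W ρ Q) (MI W Q) 0 := by
  have hsum : HasDerivAt (gallagerSum W Q) _ 0 := HasDerivAt.fun_sum (u := Finset.univ)
    fun y _ => hasDerivAt_tiltedMass_rpow hW.1 hQ.1 y
  have hone : gallagerSum W Q 0 = 1 := by
    simp only [gallagerSum, tiltedMass, add_zero, div_one, rpow_one, sum_output_eq_one hW hQ]
  refine (hsum.log (by rw [hone]; exact one_ne_zero)).fun_neg.congr_deriv ?_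
  rw [hone, div_one, Finset.sum_neg_distrib, neg_neg, MI, Finset.sum_comm]

theorem exists_mul_lt_Eo (hW : IsChannel W) (hQ : IsDist Q) (hR : R < MI W Q) :
    ∃ ρ ∈ Set.Ioo (0 : ℝ) 1, ρ * R < Eo W ρ Q := by
  have hslope := (hasDerivAt_Eo_zero hW hQ).hasDerivWithinAt (s := Set.Ioi 0)
  rw [hasDerivWithinAt_iff_tendsto_slope' Set.self_notMem_Ioi] at hslope
  obtain ⟨ρ, hlt, hρ⟩ :=
    ((hslope.eventually (lt_mem_nhds hR)).and (Ioo_mem_nhdsGT one_pos)).exists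
  rw [slope_def_field, Eo_zero hW hQ, sub_zero, sub_zero, lt_div_iff₀ hρ.1, mul_comm] at hlt
  exact ⟨ρ, hρ, hlt⟩

theorem Er_pos [Nonempty X] (hW : IsChannel W) (hR : R < Capacity W) : 0 < Er W R := by
  obtain ⟨Q₀, hQ₀⟩ := exists_isDist X
  obtain ⟨_, ⟨Q, hQ, rfl⟩, hlt⟩ := exists_lt_of_lt_csSup
    (s := {v : ℝ | ∃ Q : X → ℝ, IsDist Q ∧ v = MI W Q}) ⟨_, Q₀, hQ₀, rfl⟩ hR
  obtain ⟨ρ, hρ, hEo⟩ := exists_mul_lt_Eo hW hQ hlt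
  linarith [neg_mul_add_Eo_le_Er hW hQ R (Set.Ioo_subset_Icc_self hρ)]

theorem Er_nonneg [Nonempty X] (hW : IsChannel W) (R : ℝ) : 0 ≤ Er W R := by
  obtain ⟨Q, hQ⟩ := exists_isDist X
  simpa only [Eo_zero hW hQ, neg_zero, zero_mul, add_zero] using
    neg_mul_add_Eo_le_Er hW hQ R (Set.left_mem_Icc.mpr zero_le_one)

theorem le_Rcr [Nonempty X] (hW : IsChannel W)
    (hR : Er W R = -R + sSup {v : ℝ | ∃ Q : X → ℝ, IsDist Q ∧ v = Eo W 1 Q}) : R ≤ Rcr W := by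
  refine le_csSup ⟨sSup {v : ℝ | ∃ Q : X → ℝ, IsDist Q ∧ v = Eo W 1 Q}, fun R' hR' => ?_⟩ hR
  linarith [Er_nonneg hW R', show Er W R' = _ from hR']

theorem ne_one_of_Rcr_lt [Nonempty X] (hW : IsChannel W) (hQ : IsDist Q) (hR : Rcr W < R)
    (hopt : Er W R = -ρ * R + Eo W ρ Q) : ρ ≠ 1 := by
  rintro rfl
  have hmax : IsGreatest {v : ℝ | ∃ Q : X → ℝ, IsDist Q ∧ v = Eo W 1 Q} (Eo W 1 Q) := by
    refine ⟨⟨Q, hQ, rfl⟩, ?_⟩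
    rintro _ ⟨Q', hQ', rfl⟩
    linarith [neg_mul_add_Eo_le_Er hW hQ' R (Set.right_mem_Icc.mpr zero_le_one)]
  refine hR.not_ge (le_Rcr hW ?_)
  rw [hmax.csSup_eq, hopt, neg_one_mul]

theorem ne_zero_of_lt_Capacity [Nonempty X] (hW : IsChannel W) (hQ : IsDist Q)
    (hR : R < Capacity W) (hopt : Er W R = -ρ * R + Eo W ρ Q) : ρ ≠ 0 := by
  rintro rfl
  refine (Er_pos hW hR).ne' ?_
  rw [hopt, Eo_zero hW hQ, neg_zero, zero_mul, add_zero]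

theorem le_sSup_abs_Subderiv_Er [Nonempty X] (hW : IsChannel W) {v : ℝ}
    (hv : v ∈ Subderiv (Er W) R) : |v| ≤ sSup ((fun g => |g|) '' Subderiv (Er W) R) := by
  refine le_csSup ⟨1, ?_⟩ (Set.mem_image_of_mem _ hv)
  rintro _ ⟨g, hg, rfl⟩
  exact mod_cast abs_le_of_mem_Subderiv (lipschitzWith_one_Er hW) hg

theorem rhoStarQ_eq_of_rhoStarQ_eq_sSup [Nonempty X] (hW : IsChannel W) (hQ : IsDist Q)
    (hρ : ρ ∈ Set.Ioc 0 1) (hopt : ErQ W R Q = -ρ * R + Eo W ρ Q) (hE : ErQ W R Q = Er W R)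
    (hstar : rhoStarQ W Q R = sSup ((fun g => |g|) '' Subderiv (Er W) R)) :
    rhoStarQ W Q R = ρ := by
  have hsub := neg_mem_Subderiv_ErQ hW hQ (Set.Ioc_subset_Icc_self hρ) hopt
  by_cases hdiff : DifferentiableAt ℝ (fun a => ErQ W a Q) R
  · rw [rhoStarQ, deriv_eq_of_mem_Subderiv hdiff hsub, neg_neg]
  · -- Here `deriv` returns `0`, although `-ρ` is a nonzero subgradient of `Er W`.
    have hle := le_sSup_abs_Subderiv_Er hW
      (Subderiv_subset_of_le (fun a => ErQ_le_Er hW hQ a) hE hsub)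
    rw [← hstar, rhoStarQ, deriv_zero_of_not_differentiableAt hdiff, neg_zero, abs_neg,
      abs_of_pos hρ.1] at hle
    exact absurd hle hρ.1.not_ge

end Exponents

/-- If some nonsingular optimal `Q` attains `ρ*_R = max{|ρ| : ρ ∈ ∂E_r(R)}`,
then there is an `(N,R)` code with maximal error probability at most
`K₅ · N^{-(1+ρ*_R)/2} · exp(-N E_r(R))`. -/
theorem statement7 {X Y : Type*} [Fintype X] [Fintype Y] [Nonempty X] [Nonempty Y]
    (W : X → Y → ℝ) (hW : IsChannel W) (hcr : Rcr W < Capacity W)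
    (R : ℝ) (hR1 : Rcr W < R) (hR2 : R < Capacity W)
    (ρR : ℝ) (hρR : ρR = sSup ((fun g => |g|) '' Subderiv (Er W) R))
    (hex : ∃ Q : X → ℝ,
      IsDist Q ∧ ErQ W R Q = Er W R ∧ ¬ Singular W Q ∧ rhoStarQ W Q R = ρR) :
    ∃ K : ℝ, 0 < K ∧ ∀ N : ℕ, 0 < N →
      ∃ (f : Fin (nMsgs N R) → Fin N → X) (φ : (Fin N → Y) → Fin (nMsgs N R)),
        Pmax W f φ ≤
          K * (N : ℝ) ^ (-(1 + ρR) / 2) * Real.exp (-(N : ℝ) * Er W R) := by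
  obtain ⟨Q, hQ, hE, hns, hstar⟩ := hex
  obtain ⟨ρ, hρ, hopt⟩ := exists_ErQ_eq hW hQ R
  have hoptEr : Er W R = -ρ * R + Eo W ρ Q := hE ▸ hopt
  have hρ0 : 0 < ρ := hρ.1.lt_of_ne' (ne_zero_of_lt_Capacity hW hQ hR2 hoptEr)
  have hρ1 : ρ < 1 := hρ.2.lt_of_ne (ne_one_of_Rcr_lt hW hQ hR1 hoptEr)
  have hρR_eq : ρR = ρ := hstar ▸
    rhoStarQ_eq_of_rhoStarQ_eq_sSup hW hQ ⟨hρ0, hρ.2⟩ hopt hE (hstar.trans hρR)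
  obtain ⟨C, hC, hcode⟩ := exists_code_Pmax_le hW.1 hQ hns hρ0 hρ1
  refine ⟨C, hC, fun N hN => ?_⟩
  obtain ⟨f, φ, hP⟩ := hcode R N
  have hN0 : (0 : ℝ) < N := Nat.cast_pos.mpr hN
  have hN1 : ((N : ℝ) + 1) ^ (-(1 + ρ) / 2) ≤ (N : ℝ) ^ (-(1 + ρ) / 2) :=
    rpow_le_rpow_of_nonpos hN0 (by linarith) (by linarith)
  refine ⟨f, φ, hP.trans ?_⟩
  rw [hρR_eq, hoptEr]
  gcongr

end RCB
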